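/- For every even integer k ≥ 2 and every integer t ≥ 4, every coloring of the edges of the complete graph on 2(t − 1)·5^{(k−2)/2} + 1 vertices using k colors contains either a rainbow triangle or a monochromatic copy of P_t^+. Together with the matching lower-bound construction, this shows gr_k(K_3 : P_t^+) = 2(t − 1)·5^{(k−2)/2} + 1 for even k. -/

import Mathlib

open SimpleGraph

/-- `S_t^+`: the star on `t` vertices (center `0`, leaves `1, …, t-1`)
together with one extra edge between the leaves `1` and `2`, forming a triangle. -/
def starPlus (t : ℕ) : SimpleGraph (Fin t) :=
  SimpleGraph.fromRel (fun a b => a.val = 0 ∨ (a.val = 1 ∧ b.val = 2))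

/-- `P_t^+`: the path on `t` vertices `0, 1, …, t-1` (in order) together with
the extra edge between `0` and `2`, forming a triangle at one end. -/
def pathPlus (t : ℕ) : SimpleGraph (Fin t) :=
  SimpleGraph.fromRel (fun a b => b.val = a.val + 1 ∨ (a.val = 0 ∧ b.val = 2))

/-- An edge-coloring `c` of the complete graph on `V` contains a copy of `H`
in color `col`: an injective map of the vertices of `H` into `V` sending every
edge of `H` to a pair colored `col`. -/
def HasCopyIn {V C α : Type*} (c : Sym2 V → C) (col : C) (H : SimpleGraph α) : Prop :=
  ∃ f : α → V, Function.Injective f ∧ ∀ a b : α, H.Adj a b → c s(f a, f b) = col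

/-- An edge-coloring `c` of the complete graph on `V` contains a monochromatic copy of `H`. -/
def HasMonoCopy {V C α : Type*} (c : Sym2 V → C) (H : SimpleGraph α) : Prop :=
  ∃ col : C, HasCopyIn c col H

/-- An edge-coloring `c` of the complete graph on `V` contains a rainbow triangle:
three vertices whose three pairwise edges get pairwise distinct colors. -/
def HasRainbowTriangle {V C : Type*} (c : Sym2 V → C) : Prop :=
  ∃ u v w : V, u ≠ v ∧ u ≠ w ∧ v ≠ w ∧
    c s(u, v) ≠ c s(u, w) ∧ c s(u, v) ≠ c s(v, w) ∧ c s(u, w) ≠ c s(v, w)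

/-- The `k`-color Gallai-Ramsey number `gr_k(K_3 : H)`: the least `n` such that every
`k`-coloring of the edges of `K_n` contains a rainbow triangle or a monochromatic copy of `H`. -/
noncomputable def grK3 (k : ℕ) {α : Type*} (H : SimpleGraph α) : ℕ :=
  sInf {n : ℕ | ∀ c : Sym2 (Fin n) → Fin k, HasRainbowTriangle c ∨ HasMonoCopy c H}

/-- The `2`-color Ramsey number `R(G, H)`: the least `n` such that every red/blue
(`0`/`1`) coloring of the edges of `K_n` contains a red copy of `G` or a blue copy of `H`. -/
noncomputable def ramsey2 {α β : Type*} (G : SimpleGraph α) (H : SimpleGraph β) : ℕ :=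
  sInf {n : ℕ | ∀ c : Sym2 (Fin n) → Fin 2, HasCopyIn c 0 G ∨ HasCopyIn c 1 H}


namespace GR

open scoped Classical

section Lists

variable {V : Type*}

/-- Lists built from base lists `B` by adding a new `R`-neighbour in front of the head. -/
inductive Ext (R : V → V → Prop) (B : List V → Prop) : List V → Prop
  | base (l : List V) : B l → Ext R B l
  | cons (x y : V) (l : List V) : Ext R B (x :: l) → y ∉ x :: l → R x y → Ext R B (y :: x :: l)

lemma Ext.mono {R R' : V → V → Prop} {B B' : List V → Prop} (hR : ∀ x y, R x y → R' x y)
    (hB : ∀ l, B l → B' l) {l : List V} (h : Ext R B l) : Ext R' B' l := by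
  induction h with
  | base l hl => exact Ext.base l (hB l hl)
  | cons x y l _ hy hr ih => exact Ext.cons x y l ih hy (hR _ _ hr)

/-- alternating extension between two completely joined sets -/
lemma alt {R : V → V → Prop} {B : List V → Prop} (hirr : ∀ x, ¬ R x x) (m : ℕ) : ∀ (X Y : Finset V) (x : V) (l : List V),
    Ext R B (x :: l) → x ∈ X → (∀ x ∈ X, ∀ y ∈ Y, R x y) → (∀ x ∈ X, ∀ y ∈ Y, R y x) →
    (m + 1) / 2 ≤ (Y \ (x :: l).toFinset).card → m / 2 ≤ (X \ (x :: l).toFinset).card →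
    ∃ l', Ext R B l' ∧ l'.length = l.length + 1 + m := by
  induction m with
  | zero => intro X Y x l h _ _ _ _ _; exact ⟨x :: l, h, by simp⟩
  | succ m ih =>
    intro X Y x l h hx h1 h2 hY hX
    have hne : (Y \ (x :: l).toFinset).Nonempty := by
      rw [← Finset.card_pos]; omega
    obtain ⟨y, hy⟩ := hne
    have hyY : y ∈ Y := (Finset.mem_sdiff.1 hy).1
    have hyl : y ∉ x :: l := by
      have := (Finset.mem_sdiff.1 hy).2
      rwa [List.mem_toFinset] at this
    have hc : ∀ Z : Finset V, (Z \ (x :: l).toFinset).card - 1 ≤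
        (Z \ (y :: x :: l).toFinset).card := by
      intro Z
      have : Z \ (y :: x :: l).toFinset = (Z \ (x :: l).toFinset).erase y := by
        ext u; simp; tauto
      rw [this]; exact Finset.pred_card_le_card_erase
    have hX' : X \ (y :: x :: l).toFinset = X \ (x :: l).toFinset ∨ y ∈ X := by
      by_cases hyX : y ∈ X
      · right; exact hyX
      · left; ext u; simp only [List.toFinset_cons, Finset.mem_sdiff, Finset.mem_insert]
        constructor
        · rintro ⟨a, b⟩; exact ⟨a, fun h => b (by tauto)⟩
        · rintro ⟨a, b⟩
          refine ⟨a, fun h => ?_⟩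
          rcases h with h | h
          · exact hyX (h ▸ a)
          · exact b h
    rcases hX' with hX' | hyX
    · obtain ⟨l', hl', hlen⟩ := ih Y X y (x :: l) (Ext.cons x y l h hyl (h1 x hx y hyY)) hyY
        (fun a ha b hb => h2 b hb a ha) (fun a ha b hb => h1 b hb a ha)
        (by rw [hX']; omega) (by have := hc Y; omega)
      exact ⟨l', hl', by simp at hlen; omega⟩
    · exact absurd (h1 y hyX y hyY) (hirr y)

/-- extension through a clique -/
lemma cliqueExt {R : V → V → Prop} {B : List V → Prop} (m : ℕ) : ∀ (X : Finset V) (x : V)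
    (l : List V), Ext R B (x :: l) → x ∈ X → (∀ x ∈ X, ∀ y ∈ X, x ≠ y → R x y) →
    m ≤ (X \ (x :: l).toFinset).card → ∃ l', Ext R B l' ∧ l'.length = l.length + 1 + m := by
  induction m with
  | zero => intro X x l h _ _ _; exact ⟨x :: l, h, by simp⟩
  | succ m ih =>
    intro X x l h hx h1 hX
    have hne : (X \ (x :: l).toFinset).Nonempty := by
      rw [← Finset.card_pos]; omega
    obtain ⟨y, hy⟩ := hne
    have hyX : y ∈ X := (Finset.mem_sdiff.1 hy).1
    have hyl : y ∉ x :: l := by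
      have := (Finset.mem_sdiff.1 hy).2
      rwa [List.mem_toFinset] at this
    have hc : (X \ (x :: l).toFinset).card - 1 ≤ (X \ (y :: x :: l).toFinset).card := by
      have : X \ (y :: x :: l).toFinset = (X \ (x :: l).toFinset).erase y := by
        ext u; simp; tauto
      rw [this]; exact Finset.pred_card_le_card_erase
    have hxy : x ≠ y := by rintro rfl; simp at hyl
    obtain ⟨l', hl', hlen⟩ := ih X y (x :: l) (Ext.cons x y l h hyl (h1 x hx y hyX hxy)) hyX h1
      (by omega)
    exact ⟨l', hl', by simp at hlen; omega⟩

/-- greedy extension inside a set of minimum degree `d` -/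
lemma greedy {R : V → V → Prop} {B : List V → Prop} (hirr : ∀ x, ¬ R x x) (d : ℕ) (S : Finset V)
    (hS : ∀ x ∈ S, d ≤ (S.filter (fun y => R x y)).card) (m : ℕ) : ∀ (x : V) (l : List V),
    Ext R B (x :: l) → x ∈ S → d ≤ l.length + m → ∃ l', Ext R B l' ∧ d + 1 ≤ l'.length := by
  induction m with
  | zero => intro x l h _ hm; exact ⟨x :: l, h, by simp; omega⟩
  | succ m ih =>
    intro x l h hx hm
    by_cases hd : d ≤ l.length
    · exact ⟨x :: l, h, by simp; omega⟩
    have : ∃ y ∈ S.filter (fun y => R x y), y ∉ l.toFinset := by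
      apply Finset.exists_mem_notMem_of_card_lt_card
      have := List.toFinset_card_le l
      have := hS x hx
      omega
    obtain ⟨y, hy, hyl⟩ := this
    rw [Finset.mem_filter] at hy
    have hyl' : y ∉ x :: l := by
      rw [List.mem_cons, not_or]
      refine ⟨?_, by simpa using hyl⟩
      rintro rfl; exact hirr _ hy.2
    exact ih y (x :: l) (Ext.cons x y l h hyl' hy.2) hy.1 (by simp; omega)

/-- depth-first search lemma -/
lemma dfs {R : V → V → Prop} {B : List V → Prop} (n : ℕ) :
    ∀ (W : Finset V), W.card = n → ∀ (r : V) (l0 : List V) (m : ℕ), r ∈ W → 1 ≤ m →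
    Ext R B (r :: l0) → (∀ z ∈ l0, z ∉ W) →
    (∀ D ⊆ W, r ∈ D → (∀ x ∈ D, ∀ y ∈ W \ D, ¬ R x y) → m ≤ D.card) →
    ∃ (x : V) (l : List V) (X : Finset V), Ext R B (x :: l) ∧ x ∈ X ∧ X ⊆ W ∧ X.card = m ∧
      (∀ z ∈ l, z ∉ X) ∧ (∀ z ∈ l0, z ∈ l) ∧ (r = x ∨ r ∈ l) ∧ (∀ z ∈ l, z ∈ l0 ∨ z ∈ W) ∧
      (∀ u ∈ X, ∀ v ∈ W, v ∉ X → v ∉ l → ¬ R u v) := by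
  induction n using Nat.strong_induction_on with
  | _ n ih =>
  intro W hW r l0 m hr hm hext hl0 hcl
  by_cases hnb : ∃ r' ∈ W, r' ≠ r ∧ R r r'
  · obtain ⟨r', hr'W, hne, hrr⟩ := hnb
    by_cases hC : ∃ D ⊆ W.erase r, r' ∈ D ∧ (∀ x ∈ D, ∀ y ∈ W.erase r \ D, ¬ R x y) ∧ D.card < m
    · obtain ⟨D, hDW, hr'D, hDcl, hDm⟩ := hC
      have hrD : r ∉ D := fun h => by simpa using hDW h
      have hDW' : D ⊆ W := hDW.trans (Finset.erase_subset _ _)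
      have hDpos : 0 < D.card := Finset.card_pos.2 ⟨r', hr'D⟩
      have hcard : (W \ D).card + D.card = W.card := Finset.card_sdiff_add_card_eq_card hDW'
      obtain ⟨x, l, X, h1, h2, h3, h4, h5, h6, h8, h9, h7⟩ := ih (W \ D).card (by omega) (W \ D) rfl r l0
        (m - D.card) (by simp [hr, hrD]) (by omega) hext
        (fun z hz h => hl0 z hz (Finset.mem_sdiff.1 h).1) (by
          intro D' hD'W hrD' hD'cl
          have hdis : Disjoint D' D := by
            rw [Finset.disjoint_left]; intro a ha; exact (Finset.mem_sdiff.1 (hD'W ha)).2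
          have := hcl (D' ∪ D) (Finset.union_subset (hD'W.trans Finset.sdiff_subset) hDW')
            (by simp [hrD']) (by
              intro x hx y hy
              simp only [Finset.mem_sdiff, Finset.mem_union, not_or] at hy
              rcases Finset.mem_union.1 hx with hx | hx
              · exact hD'cl x hx y (by simp [hy])
              · apply hDcl x hx y
                simp only [Finset.mem_sdiff, Finset.mem_erase]
                refine ⟨⟨?_, hy.1⟩, hy.2.2⟩
                rintro rfl; exact hy.2.1 hrD')
          rw [Finset.card_union_of_disjoint hdis] at this
          omega)
      have hdis : Disjoint X D := by
        rw [Finset.disjoint_left]; intro a ha; exact (Finset.mem_sdiff.1 (h3 ha)).2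
      refine ⟨x, l, X ∪ D, h1, Finset.mem_union_left _ h2,
        Finset.union_subset (h3.trans Finset.sdiff_subset) hDW', ?_, ?_, h6, h8, ?_, ?_⟩
      · rw [Finset.card_union_of_disjoint hdis]; omega
      · intro z hz hz'
        rcases Finset.mem_union.1 hz' with hz' | hz'
        · exact h5 z hz hz'
        · rcases h9 z hz with h | h
          · exact hl0 z h (hDW' hz')
          · exact (Finset.mem_sdiff.1 h).2 hz'
      · intro z hz
        rcases h9 z hz with h | h
        · exact Or.inl h
        · exact Or.inr (Finset.mem_sdiff.1 h).1
      · intro u hu v hv hvX hvl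
        simp only [Finset.mem_union, not_or] at hvX
        rcases Finset.mem_union.1 hu with hu | hu
        · exact h7 u hu v (Finset.mem_sdiff.2 ⟨hv, hvX.2⟩) hvX.1 hvl
        · apply hDcl u hu v
          simp only [Finset.mem_sdiff, Finset.mem_erase]
          refine ⟨⟨?_, hv⟩, hvX.2⟩
          rintro rfl
          rcases h8 with h | h
          · exact hvX.1 (h ▸ h2)
          · exact hvl h
    · push Not at hC
      obtain ⟨x, l, X, h1, h2, h3, h4, h5, h6, h8, h9, h7⟩ := ih (W.erase r).card
        (by rw [← hW]; exact Finset.card_erase_lt_of_mem hr) (W.erase r) rfl r' (r :: l0) m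
        (by simp [hne, hr'W]) hm (Ext.cons r r' l0 hext (by
          simp only [List.mem_cons, not_or]
          exact ⟨hne, fun h => hl0 _ h hr'W⟩) hrr)
        (by
          intro z hz hz'
          simp only [Finset.mem_erase] at hz'
          rcases List.mem_cons.1 hz with h | h
          · exact hz'.1 h
          · exact hl0 z h hz'.2) hC
      refine ⟨x, l, X, h1, h2, h3.trans (Finset.erase_subset _ _), h4, h5,
        fun z hz => h6 z (by simp [hz]), Or.inr (h6 r (by simp)), ?_, ?_⟩
      · intro z hz
        rcases h9 z hz with h | h
        · rcases List.mem_cons.1 h with h | h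
          · right; rw [h]; exact hr
          · exact Or.inl h
        · exact Or.inr (Finset.mem_of_mem_erase h)
      intro u hu v hv hvX hvl
      apply h7 u hu v _ hvX hvl
      simp only [Finset.mem_erase]
      refine ⟨?_, hv⟩
      rintro rfl
      exact hvl (h6 _ (by simp))
  · push Not at hnb
    have h1 := hcl {r} (by simpa using hr) (by simp) (by
      intro x hx y hy
      simp only [Finset.mem_singleton, Finset.mem_sdiff] at hx hy
      subst hx; exact hnb y hy.1 hy.2)
    simp only [Finset.card_singleton] at h1
    refine ⟨r, l0, {r}, hext, by simp, by simpa using hr, by simp; omega, ?_, by simp, by simp,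
      fun z hz => Or.inl hz, ?_⟩
    · intro z hz; simp only [Finset.mem_singleton]; rintro rfl; exact hl0 _ hz hr
    · intro u hu v hv hvX _
      simp only [Finset.mem_singleton] at hu hvX
      subst hu; exact hnb v hv hvX

end Lists
end GR

namespace GR
open scoped Classical
section Basic
variable {V C : Type*}

lemma Ext.trunc {R : V → V → Prop} {B : List V → Prop} (b0 : ℕ) (hB : ∀ l, B l → l.length = b0)
    {l : List V} (h : Ext R B l) : ∀ m, b0 ≤ m → m ≤ l.length →
    ∃ l', Ext R B l' ∧ l'.length = m ∧ ∀ z ∈ l', z ∈ l := by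
  induction h with
  | base l hl => 
    intro m h1 h2
    exact ⟨l, Ext.base l hl, by have := hB l hl; omega, fun z hz => hz⟩
  | cons x y l h hy hr ih => 
    intro m h1 h2
    by_cases hm : m = (y :: x :: l).length
    · exact ⟨_, Ext.cons x y l h hy hr, hm.symm, fun z hz => hz⟩
    · obtain ⟨l', a, b, d⟩ := ih m h1 (by simp at h2 hm ⊢; omega)
      exact ⟨l', a, b, fun z hz => List.mem_cons_of_mem _ (d z hz)⟩

/-- edges of color `i` inside `A` -/
def E (c : V → V → C) (A : Finset V) (i : C) (x y : V) : Prop :=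
  x ∈ A ∧ y ∈ A ∧ x ≠ y ∧ c x y = i

/-- a triangle, as a list -/
def Tri (R : V → V → Prop) (l : List V) : Prop :=
  ∃ a b d, l = [a, b, d] ∧ R a b ∧ R b d ∧ R a d

/-- lists of a path with a triangle at its end, in color `i` -/
def PP (c : V → V → C) (A : Finset V) (i : C) : List V → Prop := Ext (E c A i) (Tri (E c A i))

/-- lists of a path in color `i` -/
def PA (c : V → V → C) (A : Finset V) (i : C) : List V → Prop :=
  Ext (E c A i) (fun l => ∃ a ∈ A, l = [a])

/-- the path condition with parameter `b` -/
def Good (t : ℕ) (c : V → V → C) (A : Finset V) (i : C) (b : ℕ) : Prop :=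
  (b = 0 → ∀ l, PP c A i l → l.length < t) ∧ (1 ≤ b → ∀ l, PA c A i l → l.length + 2 * b ≤ t)

variable {c : V → V → C} {A A' : Finset V} {i : C} {t : ℕ}

lemma E.irr (x : V) : ¬ E c A i x x := fun h => h.2.2.1 rfl

lemma E.symm (hs : ∀ x y, c x y = c y x) {x y : V} (h : E c A i x y) : E c A i y x :=
  ⟨h.2.1, h.1, h.2.2.1.symm, by rw [hs]; exact h.2.2.2⟩

lemma E.mono (hA : A ⊆ A') {x y : V} (h : E c A i x y) : E c A' i x y :=
  ⟨hA h.1, hA h.2.1, h.2.2⟩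

lemma PP.mono (hA : A ⊆ A') {l : List V} (h : PP c A i l) : PP c A' i l := by
  refine Ext.mono (fun x y h => h.mono hA) ?_ h
  rintro l ⟨a, b, d, h1, h2, h3, h4⟩
  exact ⟨a, b, d, h1, h2.mono hA, h3.mono hA, h4.mono hA⟩

lemma PA.mono (hA : A ⊆ A') {l : List V} (h : PA c A i l) : PA c A' i l := by
  refine Ext.mono (fun x y h => h.mono hA) ?_ h
  rintro l ⟨a, h1, h2⟩
  exact ⟨a, hA h1, h2⟩

lemma Good.mono (hA : A ⊆ A') {b : ℕ} (h : Good t c A' i b) : Good t c A i b :=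
  ⟨fun hb l hl => h.1 hb l (hl.mono hA), fun hb l hl => h.2 hb l (hl.mono hA)⟩

lemma PP.mem {l : List V} (h : PP c A i l) : ∀ z ∈ l, z ∈ A := by
  induction h with
  | base l hl =>
    obtain ⟨a, b, d, rfl, h1, h2, h3⟩ := hl
    simp [h1.1, h1.2.1, h2.2.1]
  | cons x y l h hy hr ih =>
    intro z hz
    rcases List.mem_cons.1 hz with rfl | hz
    · exact hr.2.1
    · exact ih z hz

lemma PA.mem {l : List V} (h : PA c A i l) : ∀ z ∈ l, z ∈ A := by
  induction h with
  | base l hl =>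
    obtain ⟨a, h1, rfl⟩ := hl
    simp [h1]
  | cons x y l h hy hr ih =>
    intro z hz
    rcases List.mem_cons.1 hz with rfl | hz
    · exact hr.2.1
    · exact ih z hz

lemma PA.ne_nil {l : List V} (h : PA c A i l) : l ≠ [] := by
  cases h with
  | base l hl => obtain ⟨a, h1, rfl⟩ := hl; simp
  | cons x y l h hy hr => simp

lemma PP.trunc {l : List V} (h : PP c A i l) (m : ℕ) (hm : 3 ≤ m) (hl : m ≤ l.length) :
    ∃ l', PP c A i l' ∧ l'.length = m ∧ ∀ z ∈ l', z ∈ l :=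
  Ext.trunc 3 (by rintro l ⟨a, b, d, rfl, _⟩; rfl) h m hm hl

lemma PA.trunc {l : List V} (h : PA c A i l) (m : ℕ) (hm : 1 ≤ m) (hl : m ≤ l.length) :
    ∃ l', PA c A i l' ∧ l'.length = m ∧ ∀ z ∈ l', z ∈ l :=
  Ext.trunc 1 (by rintro l ⟨a, _, rfl⟩; rfl) h m hm hl

lemma card_sdiff_list (X : Finset V) (l : List V) : X.card ≤ (X \ l.toFinset).card + l.length := by
  have h1 := Finset.le_card_sdiff l.toFinset X
  have h2 := List.toFinset_card_le l
  omega

lemma bipPP (hs : ∀ x y, c x y = c y x) (ht : 4 ≤ t) {X Y : Finset V} (hX : X ⊆ A) (hY : Y ⊆ A)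
    (hd : Disjoint X Y) (hj : ∀ x ∈ X, ∀ y ∈ Y, c x y = i) {x1 x2 : V} (h1 : x1 ∈ X) (h2 : x2 ∈ X)
    (hne : x1 ≠ x2) (hc : c x1 x2 = i) (hXc : (t + 1) / 2 ≤ X.card) (hYc : t / 2 ≤ Y.card) :
    ∃ l, PP c A i l ∧ l.length = t := by
  have hxy : ∀ x ∈ X, ∀ y ∈ Y, E c A i x y := fun x hx y hy =>
    ⟨hX hx, hY hy, fun h => Finset.disjoint_left.1 hd hx (h ▸ hy), hj x hx y hy⟩
  obtain ⟨y, hy⟩ : Y.Nonempty := by rw [← Finset.card_pos]; omega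
  have hbase : PP c A i [x2, y, x1] := Ext.base _ ⟨x2, y, x1, rfl, hxy _ h2 _ hy,
    (hxy _ h1 _ hy).symm hs, ⟨hX h2, hX h1, hne.symm, by rw [hs]; exact hc⟩⟩
  obtain ⟨l, hl, hlen⟩ := alt E.irr (t - 3) X Y x2 [y, x1] hbase h2 hxy
    (fun x hx y hy => (hxy x hx y hy).symm hs)
    (by
      have : Y \ [x2, y, x1].toFinset = Y.erase y := by
        ext u; simp only [List.toFinset_cons, List.toFinset_nil, Finset.mem_sdiff,
          Finset.mem_insert, Finset.notMem_empty, or_false, not_or, Finset.mem_erase]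
        constructor
        · tauto
        · rintro ⟨a, b⟩
          exact ⟨b, fun h => Finset.disjoint_left.1 hd h2 (h ▸ b), a,
            fun h => Finset.disjoint_left.1 hd h1 (h ▸ b)⟩
      rw [this, Finset.card_erase_of_mem hy]; omega)
    (by
      have : X \ [x2, y, x1].toFinset = (X.erase x1).erase x2 := by
        ext u; simp only [List.toFinset_cons, List.toFinset_nil, Finset.mem_sdiff,
          Finset.mem_insert, Finset.notMem_empty, or_false, not_or, Finset.mem_erase]
        constructor
        · tauto
        · rintro ⟨a, b, d⟩
          exact ⟨d, a, fun h => Finset.disjoint_left.1 hd d (h ▸ hy), b⟩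
      rw [this, Finset.card_erase_of_mem (by simp [h2, hne.symm]), Finset.card_erase_of_mem h1]
      omega)
  exact ⟨l, hl, by rw [hlen]; simp; omega⟩

/-- a color class completely joining two large sets does not appear inside them -/
lemma Good.noInner (hs : ∀ x y, c x y = c y x) (ht : 4 ≤ t) (hg : Good t c A i 0) {X Y : Finset V}
    (hX : X ⊆ A) (hY : Y ⊆ A)
    (hd : Disjoint X Y) (hj : ∀ x ∈ X, ∀ y ∈ Y, c x y = i)
    (hXc : (t + 1) / 2 ≤ X.card) (hYc : t / 2 ≤ Y.card) :
    ∀ x ∈ X, ∀ y ∈ X, x ≠ y → c x y ≠ i := by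
  intro x hx y hy hne hc
  obtain ⟨l, hl, hlen⟩ := bipPP hs ht hX hY hd hj hx hy hne hc hXc hYc
  have := hg.1 rfl l hl
  omega

lemma bipPA (hs : ∀ x y, c x y = c y x) {X Y : Finset V} (hX : X ⊆ A) (hY : Y ⊆ A)
    (hd : Disjoint X Y) (hj : ∀ x ∈ X, ∀ y ∈ Y, c x y = i) (m : ℕ)
    (hYc : (m + 1) / 2 ≤ Y.card) (hXc : m / 2 + 1 ≤ X.card) :
    ∃ l, PA c A i l ∧ l.length = m + 1 := by
  have hxy : ∀ x ∈ X, ∀ y ∈ Y, E c A i x y := fun x hx y hy =>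
    ⟨hX hx, hY hy, fun h => Finset.disjoint_left.1 hd hx (h ▸ hy), hj x hx y hy⟩
  obtain ⟨x, hx⟩ : X.Nonempty := by rw [← Finset.card_pos]; omega
  have hbase : PA c A i [x] := Ext.base _ ⟨x, hX hx, rfl⟩
  obtain ⟨l, hl, hlen⟩ := alt E.irr m X Y x [] hbase hx hxy
    (fun x hx y hy => (hxy x hx y hy).symm hs)
    (by
      have : Y \ [x].toFinset = Y := by
        ext u; simp only [List.toFinset_cons, List.toFinset_nil, Finset.mem_sdiff,
          Finset.mem_insert, Finset.notMem_empty, or_false]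
        exact ⟨fun h => h.1, fun b => ⟨b, fun h => Finset.disjoint_left.1 hd hx (h ▸ b)⟩⟩
      rw [this]; omega)
    (by
      have := card_sdiff_list X [x]
      simp only [List.length_cons, List.length_nil] at this
      omega)
  exact ⟨l, hl, by rw [hlen]; simp; omega⟩

lemma cliquePP {X : Finset V} (hX : X ⊆ A) (hcl : ∀ x ∈ X, ∀ y ∈ X, x ≠ y → c x y = i)
    (h3 : 3 ≤ X.card) : ∃ l, PP c A i l ∧ l.length = X.card := by
  obtain ⟨x, y, z, hx, hy, hz, hxy, hxz, hyz⟩ := Finset.two_lt_card_iff.1 h3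
  have hE : ∀ x ∈ X, ∀ y ∈ X, x ≠ y → E c A i x y := fun x hx y hy h =>
    ⟨hX hx, hX hy, h, hcl x hx y hy h⟩
  obtain ⟨l, hl, hlen⟩ := cliqueExt (X.card - 3) X x [y, z] (B := Tri (E c A i)) (R := E c A i)
    (Ext.base _ ⟨x, y, z, rfl, hE x hx y hy hxy, hE y hy z hz hyz, hE x hx z hz hxz⟩) hx hE
    (by have := card_sdiff_list X [x, y, z]; simp only [List.length_cons, List.length_nil] at this
        omega)
  exact ⟨l, hl, by rw [hlen]; simp; omega⟩

lemma cliquePA {X : Finset V} (hX : X ⊆ A) (hcl : ∀ x ∈ X, ∀ y ∈ X, x ≠ y → c x y = i)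
    (h3 : 1 ≤ X.card) : ∃ l, PA c A i l ∧ l.length = X.card := by
  obtain ⟨x, hx⟩ := Finset.card_pos.1 h3
  have hE : ∀ x ∈ X, ∀ y ∈ X, x ≠ y → E c A i x y := fun x hx y hy h =>
    ⟨hX hx, hX hy, h, hcl x hx y hy h⟩
  obtain ⟨l, hl, hlen⟩ := cliqueExt (X.card - 1) X x [] (B := fun l => ∃ a ∈ A, l = [a])
    (R := E c A i) (Ext.base _ ⟨x, hX hx, rfl⟩) hx hE
    (by have := card_sdiff_list X [x]; simp only [List.length_cons, List.length_nil] at this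
        omega)
  exact ⟨l, hl, by rw [hlen]; simp; omega⟩

lemma insertPP (hs : ∀ x y, c x y = c y x) {Y : Finset V} (hY : Y ⊆ A) {z : V} (hz : z ∈ A)
    (hzY : z ∉ Y) (hj : ∀ y ∈ Y, c y z = i) {l : List V} (h : PA c Y i l) :
    (∃ a, l = [a]) ∨ ∃ x l1 l', l = x :: l1 ∧ PP c A i (x :: l') ∧ l'.length = l1.length + 1 ∧
      ∀ w ∈ x :: l', w = z ∨ w ∈ l := by
  have hE : ∀ y ∈ Y, E c A i y z := fun y hy => ⟨hY hy, hz, fun h => hzY (h ▸ hy), hj y hy⟩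
  induction h with
  | base l hl => obtain ⟨a, _, rfl⟩ := hl; exact Or.inl ⟨a, rfl⟩
  | cons x y l h hy hr ih =>
    right
    rcases ih with ⟨a, ha⟩ | ⟨x', l1, l', h1, h2, h3, h4⟩
    · simp only [List.cons.injEq] at ha
      obtain ⟨_, rfl⟩ := ha
      refine ⟨y, [x], [z, x], rfl, Ext.base _ ⟨y, z, x, rfl, hE y hr.2.1, (hE x hr.1).symm hs,
        (hr.mono hY).symm hs⟩, by simp, by simp⟩
    · simp only [List.cons.injEq] at h1
      obtain ⟨rfl, rfl⟩ := h1
      refine ⟨y, x :: l, x :: l', rfl, Ext.cons x y l' h2 ?_ (hr.mono hY), by simp [h3], ?_⟩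
      · intro hmem
        rcases h4 y hmem with h | h
        · exact hzY (h ▸ hr.2.1)
        · exact hy h
      · intro w hw
        rcases List.mem_cons.1 hw with rfl | hw
        · simp
        · rcases h4 w hw with h | h
          · exact Or.inl h
          · exact Or.inr (List.mem_cons_of_mem _ h)

lemma peel (hs : ∀ x y, c x y = c y x) {b : ℕ} (hb : 2 * b + 1 ≤ t) (hg : Good t c A i b)
    {Y Z : Finset V} (hY : Y ⊆ A) (hZ : Z ⊆ A) (hd : Disjoint Y Z)
    (hj : ∀ y ∈ Y, ∀ z ∈ Z, c y z = i) (h1 : 2 * Z.card + 1 ≤ t) (h2 : t ≤ Y.card + Z.card)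
    (h3 : Z.card + 1 ≤ Y.card) : 2 * (b + Z.card) + 1 ≤ t ∧ Good t c Y i (b + Z.card) := by
  have hyz : ∀ x ∈ Y, ∀ y ∈ Z, E c A i x y := fun x hx y hy =>
    ⟨hY hx, hZ hy, fun h => Finset.disjoint_left.1 hd hx (h ▸ hy), hj x hx y hy⟩
  have key : 2 * (b + Z.card) + 1 ≤ t := by
    rcases Nat.eq_zero_or_pos b with rfl | hb1
    · omega
    · obtain ⟨l, hl, hlen⟩ := bipPA hs hY hZ hd hj (2 * Z.card) (by omega) (by omega)
      have := hg.2 hb1 l hl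
      omega
  refine ⟨key, ?_⟩
  by_cases h0 : b + Z.card = 0
  · obtain ⟨rfl, hz⟩ : b = 0 ∧ Z.card = 0 := by omega
    rw [hz]; exact hg.mono hY
  refine ⟨fun h => absurd h h0, fun _ l hl => ?_⟩
  by_contra hcon
  obtain ⟨l1, hl1, hlen1, -⟩ := hl.trunc (t + 1 - 2 * (b + Z.card)) (by omega) (by omega)
  obtain ⟨x, l2, rfl⟩ := List.exists_cons_of_ne_nil hl1.ne_nil
  have hxY : x ∈ Y := hl1.mem x (by simp)
  simp only [List.length_cons] at hlen1
  rcases Nat.eq_zero_or_pos b with rfl | hb1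
  · obtain ⟨z, hz⟩ : Z.Nonempty := by rw [← Finset.card_pos]; omega
    rcases insertPP hs hY (hZ hz) (fun h => Finset.disjoint_left.1 hd h hz)
      (fun y hy => hj y hy z hz) hl1 with ⟨a, ha⟩ | ⟨x', l1', l', e1, e2, e3, e4⟩
    · simp only [List.cons.injEq] at ha
      obtain ⟨_, rfl⟩ := ha
      simp only [List.length_nil] at hlen1
      omega
    · simp only [List.cons.injEq] at e1
      obtain ⟨rfl, rfl⟩ := e1
      obtain ⟨l, hl, hlen⟩ := alt E.irr (2 * (Z.card - 1)) Y Z x l' e2 hxY hyz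
        (fun x hx y hy => (hyz x hx y hy).symm hs)
        (by
          have : Z.erase z ⊆ Z \ (x :: l').toFinset := by
            intro u hu
            simp only [Finset.mem_erase] at hu
            rw [Finset.mem_sdiff, List.mem_toFinset]
            refine ⟨hu.2, fun h => ?_⟩
            rcases e4 u h with h | h
            · exact hu.1 h
            · exact Finset.disjoint_left.1 hd (hl1.mem u h) hu.2
          have := Finset.card_le_card this
          rw [Finset.card_erase_of_mem hz] at this
          omega)
        (by
          have : Y \ (x :: l2).toFinset ⊆ Y \ (x :: l').toFinset := by
            intro u hu
            rw [Finset.mem_sdiff, List.mem_toFinset] at hu ⊢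
            refine ⟨hu.1, fun h => ?_⟩
            rcases e4 u h with h | h
            · exact Finset.disjoint_left.1 hd hu.1 (h ▸ hz)
            · exact hu.2 h
          have := Finset.card_le_card this
          have := card_sdiff_list Y (x :: l2)
          simp only [List.length_cons] at this
          omega)
      have := hg.1 rfl l hl
      omega
  · obtain ⟨l, hl, hlen⟩ := alt E.irr (2 * Z.card) Y Z x l2 (hl1.mono hY) hxY hyz
        (fun x hx y hy => (hyz x hx y hy).symm hs)
        (by
          have : Z ⊆ Z \ (x :: l2).toFinset := by
            intro u hu
            rw [Finset.mem_sdiff, List.mem_toFinset]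
            exact ⟨hu, fun h => Finset.disjoint_left.1 hd (hl1.mem u h) hu⟩
          have := Finset.card_le_card this
          omega)
        (by
          have := card_sdiff_list Y (x :: l2)
          simp only [List.length_cons] at this
          omega)
    have := hg.2 hb1 l hl
    omega

end Basic
end GR

namespace GR
open scoped Classical
section Basic2
variable {V C : Type*} {c : V → V → C} {A A' : Finset V} {i : C} {t : ℕ}

/-- color `i` is connected on `A` -/
def Conn (c : V → V → C) (A : Finset V) (i : C) : Prop :=
  ∀ D ⊆ A, D.Nonempty → (∀ x ∈ D, ∀ y ∈ A, y ∉ D → c x y ≠ i) → D = A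

lemma PP.head_of_mem (hs : ∀ x y, c x y = c y x) {l : List V} (h : PP c A i l) :
    ∀ y ∈ l, ∃ l', PP c A i (y :: l') := by
  induction h with
  | base l hl =>
    obtain ⟨a, b, d, rfl, h1, h2, h3⟩ := hl
    intro y hy
    simp only [List.mem_cons, List.not_mem_nil, or_false] at hy
    rcases hy with rfl | rfl | rfl
    · exact ⟨[b, d], Ext.base _ ⟨_, _, _, rfl, h1, h2, h3⟩⟩
    · exact ⟨[a, d], Ext.base _ ⟨_, _, _, rfl, h1.symm hs, h3, h2⟩⟩
    · exact ⟨[a, b], Ext.base _ ⟨_, _, _, rfl, h3.symm hs, h1, h2.symm hs⟩⟩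
  | cons x y l h hy hr ih =>
    intro z hz
    rcases List.mem_cons.1 hz with rfl | hz
    · exact ⟨_, Ext.cons x _ l h hy hr⟩
    · exact ih z hz

lemma heads (hs : ∀ x y, c x y = c y x) (hc : Conn c A i) {a b d : V} (h1 : E c A i a b)
    (h2 : E c A i b d) (h3 : E c A i a d) : ∀ x ∈ A, ∃ l, PP c A i (x :: l) := by
  have := hc (A.filter (fun x => ∃ l, PP c A i (x :: l))) (Finset.filter_subset _ _)
    ⟨a, by simp only [Finset.mem_filter]; exact ⟨h1.1, [b, d], Ext.base _ ⟨a, b, d, rfl, h1, h2, h3⟩⟩⟩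
    (by
      intro x hx y hy hyD hxy
      simp only [Finset.mem_filter] at hx hyD
      obtain ⟨hxA, l, hl⟩ := hx
      apply hyD
      refine ⟨hy, ?_⟩
      by_cases hyl : y ∈ x :: l
      · exact hl.head_of_mem hs y hyl
      · exact ⟨x :: l, Ext.cons x y l hl hyl ⟨hxA, hy, fun h => hyl (by simp [h]), hxy⟩⟩)
  intro x hx
  rw [← this] at hx
  exact (Finset.mem_filter.1 hx).2

lemma dense {R : V → V → Prop} (hsym : ∀ x y, R x y → R y x) (d : ℕ) (n : ℕ) :
    ∀ A : Finset V, A.card = n →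
    2 * d * A.card < ∑ x ∈ A, (A.filter (fun y => R x y)).card →
    ∃ S ⊆ A, S.Nonempty ∧ ∀ x ∈ S, d + 1 ≤ (S.filter (fun y => R x y)).card := by
  induction n with
  | zero => intro A hA h; rw [Finset.card_eq_zero] at hA; subst hA; simp at h
  | succ n ih =>
    intro A hA h
    by_cases hall : ∀ x ∈ A, d + 1 ≤ (A.filter (fun y => R x y)).card
    · exact ⟨A, subset_rfl, by rw [← Finset.card_pos]; omega, hall⟩
    · push Not at hall
      obtain ⟨x, hx, hxd⟩ := hall
      have hcard := Finset.card_erase_of_mem hx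
      obtain ⟨S, hS, h1, h2⟩ := ih (A.erase x) (by omega) (by
        have e1 : ∑ y ∈ A, (A.filter (fun z => R y z)).card =
          (A.filter (fun z => R x z)).card +
            ∑ y ∈ A.erase x, (A.filter (fun z => R y z)).card :=
          (Finset.add_sum_erase A _ hx).symm
        have e2 : ∀ y ∈ A.erase x, (A.filter (fun z => R y z)).card ≤
            ((A.erase x).filter (fun z => R y z)).card + if R y x then 1 else 0 := by
          intro y _
          have : (A.erase x).filter (fun z => R y z) = (A.filter (fun z => R y z)).erase x := by
            ext; simp; tauto
          rw [this]
          split_ifs with hyx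
          · rw [Finset.card_erase_of_mem (by simp [hx, hyx])]; omega
          · rw [Finset.erase_eq_of_notMem (by simp [hyx])]; omega
        have e3 := Finset.sum_le_sum e2
        rw [Finset.sum_add_distrib] at e3
        have e4 : (∑ y ∈ A.erase x, if R y x then 1 else 0) ≤ (A.filter (fun z => R x z)).card := by
          rw [← Finset.card_filter]
          apply Finset.card_le_card
          intro u hu
          simp only [Finset.mem_filter, Finset.mem_erase] at hu ⊢
          exact ⟨hu.1.2, hsym _ _ hu.2⟩
        rw [hcard]
        have hpos : 1 ≤ A.card := by omega
        obtain ⟨q, hq⟩ : ∃ q, A.card = q + 1 := ⟨A.card - 1, by omega⟩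
        rw [hq] at h ⊢
        simp only [Nat.add_sub_cancel]
        rw [Nat.mul_add] at h
        omega)
      exact ⟨S, hS.trans (Finset.erase_subset _ _), h1, h2⟩

lemma multipart (hs : ∀ x y, c x y = c y x) (ht : 4 ≤ t) {X : Finset V} (hX : X ⊆ A) (p : V → V)
    (hp : ∀ x ∈ X, ∀ y ∈ X, p x ≠ p y → c x y = i)
    (hsm : ∀ x ∈ X, (X.filter (fun y => p y = p x)).card + 1 ≤ (t + 1) / 2)
    (hc : (t - 1) + t / 2 ≤ X.card) : ∃ l, PP c A i l ∧ l.length = t := by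
  let F := X.powerset.filter (fun D => (t + 1) / 2 ≤ D.card ∧ ∀ x ∈ D, ∀ y ∈ X, p x = p y → y ∈ D)
  have hXF : X ∈ F := by
    simp only [F, Finset.mem_filter, Finset.mem_powerset]
    exact ⟨subset_rfl, by omega, fun x _ y hy _ => hy⟩
  obtain ⟨X1, hX1, hmin⟩ := Finset.exists_min_image F Finset.card ⟨X, hXF⟩
  simp only [F, Finset.mem_filter, Finset.mem_powerset] at hX1 hmin
  obtain ⟨hX1X, hX1c, hX1p⟩ := hX1
  obtain ⟨x, hx⟩ : X1.Nonempty := by rw [← Finset.card_pos]; omega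
  have hsub : X.filter (fun y => p y = p x) ⊆ X1 := by
    intro y hy
    rw [Finset.mem_filter] at hy
    exact hX1p x hx y hy.1 hy.2.symm
  have hcard := Finset.card_sdiff_add_card_eq_card hsub
  have hsmx := hsm x (hX1X hx)
  have hle : (X1 \ X.filter (fun y => p y = p x)).card < (t + 1) / 2 := by
    by_contra hcon
    have := hmin (X1 \ X.filter (fun y => p y = p x)) ⟨Finset.sdiff_subset.trans hX1X, by omega, by
      intro u hu y hy huy
      simp only [Finset.mem_sdiff, Finset.mem_filter, not_and] at hu ⊢
      exact ⟨hX1p u hu.1 y hy huy, fun _ h => hu.2 (hX1X hu.1) (huy.trans h)⟩⟩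
    have hpos : 0 < (X.filter (fun y => p y = p x)).card :=
      Finset.card_pos.2 ⟨x, by simp [hX1X hx]⟩
    omega
  obtain ⟨y, hy⟩ : (X1 \ X.filter (fun y => p y = p x)).Nonempty := by
    rw [← Finset.card_pos]; omega
  simp only [Finset.mem_sdiff, Finset.mem_filter, not_and] at hy
  have hpxy : p x ≠ p y := fun h => hy.2 (hX1X hy.1) h.symm
  have := Finset.card_sdiff_add_card_eq_card hX1X
  refine bipPP hs ht (hX1X.trans hX) (Finset.sdiff_subset.trans hX : X \ X1 ⊆ A)
    Finset.disjoint_sdiff ?_ hx hy.1 (fun h => hpxy (by rw [h]))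
    (hp x (hX1X hx) y (hX1X hy.1) hpxy) hX1c (by omega)
  intro u hu v hv
  rw [Finset.mem_sdiff] at hv
  exact hp u (hX1X hu) v hv.1 (fun h => hv.2 (hX1p u hu v hv.1 h))

end Basic2
end GR

namespace GR
open scoped Classical
section Two
variable {V C : Type*} {c : V → V → C} {A A' : Finset V} {i r s : C} {t : ℕ}

lemma dfsU {R : V → V → Prop} {B : List V → Prop} (n : ℕ) :
    ∀ (W : Finset V) (m : ℕ), W.card = n → 1 ≤ m → m ≤ W.card → (∀ a ∈ W, B [a]) →
    ∃ (x : V) (l : List V) (X : Finset V), Ext R B (x :: l) ∧ x ∈ X ∧ X ⊆ W ∧ X.card = m ∧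
      (∀ z ∈ l, z ∉ X) ∧ (∀ z ∈ l, z ∈ W) ∧
      (∀ u ∈ X, ∀ v ∈ W, v ∉ X → v ∉ l → ¬ R u v) := by
  induction n using Nat.strong_induction_on with
  | _ n ih =>
  intro W m hW hm hmW hB
  obtain ⟨r, hr⟩ : W.Nonempty := by rw [← Finset.card_pos]; omega
  by_cases hC : ∃ D ⊆ W, r ∈ D ∧ (∀ x ∈ D, ∀ y ∈ W \ D, ¬ R x y) ∧ D.card < m
  · obtain ⟨D, hDW, hrD, hDcl, hDm⟩ := hC
    have hDpos : 0 < D.card := Finset.card_pos.2 ⟨r, hrD⟩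
    have hcard : (W \ D).card + D.card = W.card := Finset.card_sdiff_add_card_eq_card hDW
    obtain ⟨x, l, X, h1, h2, h3, h4, h5, h9, h7⟩ := ih (W \ D).card (by omega) (W \ D)
      (m - D.card) rfl (by omega) (by omega) (fun a ha => hB a (Finset.mem_sdiff.1 ha).1)
    have hdis : Disjoint X D := by
      rw [Finset.disjoint_left]; intro a ha; exact (Finset.mem_sdiff.1 (h3 ha)).2
    refine ⟨x, l, X ∪ D, h1, Finset.mem_union_left _ h2,
        Finset.union_subset (h3.trans Finset.sdiff_subset) hDW, ?_, ?_, ?_, ?_⟩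
    · rw [Finset.card_union_of_disjoint hdis]; omega
    · intro z hz hz'
      rcases Finset.mem_union.1 hz' with hz' | hz'
      · exact h5 z hz hz'
      · exact (Finset.mem_sdiff.1 (h9 z hz)).2 hz'
    · intro z hz
      exact (Finset.mem_sdiff.1 (h9 z hz)).1
    · intro u hu v hv hvX hvl
      simp only [Finset.mem_union, not_or] at hvX
      rcases Finset.mem_union.1 hu with hu | hu
      · exact h7 u hu v (Finset.mem_sdiff.2 ⟨hv, hvX.2⟩) hvX.1 hvl
      · exact hDcl u hu v (Finset.mem_sdiff.2 ⟨hv, hvX.2⟩)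
  · push Not at hC
    obtain ⟨x, l, X, h1, h2, h3, h4, h5, h6, h8, h9, h7⟩ := dfs (R := R) (B := B) W.card W rfl r []
      m hr hm (Ext.base _ (hB r hr)) (by simp) hC
    exact ⟨x, l, X, h1, h2, h3, h4, h5, fun z hz => by simpa using h9 z hz, h7⟩

lemma card_rest {X : Finset V} {l : List V} (hX : X ⊆ A) :
    A.card ≤ (A \ (X ∪ l.toFinset)).card + X.card + l.length := by
  have h1 := Finset.le_card_sdiff (X ∪ l.toFinset) A
  have h2 := Finset.card_union_le X l.toFinset
  have h3 := List.toFinset_card_le l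
  omega

lemma card_sdiff_self {X : Finset V} {x : V} {l : List V} (hx : x ∈ X) (hl : ∀ z ∈ l, z ∉ X) :
    (X \ (x :: l).toFinset).card = X.card - 1 := by
  have : X \ (x :: l).toFinset = X.erase x := by
    ext u; simp only [List.toFinset_cons, Finset.mem_sdiff, Finset.mem_insert, List.mem_toFinset,
      not_or, Finset.mem_erase]
    constructor
    · tauto
    · rintro ⟨a, b⟩; exact ⟨b, a, fun h => hl u h b⟩
  rw [this, Finset.card_erase_of_mem hx]

lemma two_pos (hs : ∀ x y, c x y = c y x) (ht : 4 ≤ t)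
    (hcol : ∀ x ∈ A, ∀ y ∈ A, x ≠ y → c x y = r ∨ c x y = s) {br bs : ℕ}
    (hr : Good t c A r br) (hg : Good t c A s bs) (h1 : 1 ≤ br) (hbr : 2 * br + 1 ≤ t)
    (hbs : 2 * bs + 1 ≤ t) : A.card + br + bs + 1 ≤ 2 * t - 1 := by
  by_contra hn
  obtain ⟨x, l, X, e1, e2, e3, e4, e5, e6, e7⟩ := dfsU (R := E c A r) (B := fun l => ∃ a ∈ A, l = [a])
    A.card A ((t + 1) / 2) rfl (by omega) (by omega) (fun a ha => ⟨a, ha, rfl⟩)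
  have hlen := hr.2 h1 _ e1
  simp only [List.length_cons] at hlen
  obtain ⟨Y, hY⟩ : ∃ Y, Y = A \ (X ∪ l.toFinset) := ⟨_, rfl⟩
  have hYc := card_rest (l := l) e3
  rw [← hY] at hYc
  have hYA : Y ⊆ A := by rw [hY]; exact Finset.sdiff_subset
  have hd : Disjoint X Y := by
    rw [hY, Finset.disjoint_left]; intro a ha h
    simp [ha] at h
  have hj : ∀ x ∈ X, ∀ y ∈ Y, c x y = s := by
    intro u hu v hv
    have hne : u ≠ v := fun h => Finset.disjoint_left.1 hd hu (h ▸ hv)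
    have hv' := hv
    rw [hY, Finset.mem_sdiff, Finset.mem_union, List.mem_toFinset, not_or] at hv'
    rcases hcol u (e3 hu) v (hYA hv) hne with h | h
    · exact absurd ⟨e3 hu, hYA hv, hne, h⟩ (e7 u hu v (hYA hv) hv'.2.1 hv'.2.2)
    · exact h
  rcases Nat.eq_zero_or_pos bs with rfl | hb
  · have hno := hg.noInner hs ht e3 hYA hd hj (by omega) (by omega)
    have hcl : ∀ x ∈ X, ∀ y ∈ X, x ≠ y → E c A r x y := fun x hx y hy hne =>
      ⟨e3 hx, e3 hy, hne, (hcol x (e3 hx) y (e3 hy) hne).resolve_right (hno x hx y hy hne)⟩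
    obtain ⟨l', hl', hlen'⟩ := cliqueExt (X.card - 1) X x l e1 e2 hcl
      (card_sdiff_self e2 e5).ge
    have := hr.2 h1 _ hl'
    have hno2 := hg.noInner hs ht hYA e3 hd.symm
      (fun y hy x hx => by rw [hs]; exact hj x hx y hy) (by omega) (by omega)
    obtain ⟨l2, hl2, hlen2⟩ := cliquePA (c := c) (i := r) hYA (fun x hx y hy hne =>
      (hcol x (hYA hx) y (hYA hy) hne).resolve_right (hno2 x hx y hy hne)) (by omega)
    have := hr.2 h1 _ hl2
    omega
  · obtain ⟨l', hl', hlen'⟩ := bipPA hs e3 hYA hd hj (t - 2 * bs) (by omega) (by omega)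
    have := hg.2 hb _ hl'
    omega

lemma two_core (hs : ∀ x y, c x y = c y x) (ht : 4 ≤ t)
    (hcol : ∀ x ∈ A, ∀ y ∈ A, x ≠ y → c x y = r ∨ c x y = s)
    (hr : Good t c A r 0) (hg : Good t c A s 0) (hn : 2 * t - 1 ≤ A.card)
    {v1 v2 v3 : V} (t1 : E c A r v1 v2) (t2 : E c A r v2 v3) (t3 : E c A r v1 v3)
    (hcl : ∀ D ⊆ (A.erase v1).erase v2, v3 ∈ D → (∀ x ∈ D, ∀ y ∈ (A.erase v1).erase v2 \ D,
      ¬ E c A r x y) → (t + 1) / 2 ≤ D.card) : False := by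
  obtain ⟨x, l, X, e1, e2, e3, e4, e5, e6, e8, e9, e7⟩ := dfs (R := E c A r) (B := Tri (E c A r))
    _ ((A.erase v1).erase v2) rfl v3 [v2, v1] ((t + 1) / 2)
    (by simp [t2.2.1, t2.2.2.1.symm, t3.2.2.1.symm]) (by omega)
    (Ext.base _ ⟨v3, v2, v1, rfl, t2.symm hs, t1.symm hs, t3.symm hs⟩) (by simp) hcl
  have e3' : X ⊆ A := e3.trans ((Finset.erase_subset _ _).trans (Finset.erase_subset _ _))
  have hlen := hr.1 rfl _ e1
  simp only [List.length_cons] at hlen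
  obtain ⟨Y, hY⟩ : ∃ Y, Y = A \ (X ∪ l.toFinset) := ⟨_, rfl⟩
  have hYc := card_rest (l := l) e3'
  rw [← hY] at hYc
  have hYA : Y ⊆ A := by rw [hY]; exact Finset.sdiff_subset
  have hd : Disjoint X Y := by
    rw [hY, Finset.disjoint_left]; intro a ha h
    simp [ha] at h
  have hj : ∀ x ∈ X, ∀ y ∈ Y, c x y = s := by
    intro u hu v hv
    have hne : u ≠ v := fun h => Finset.disjoint_left.1 hd hu (h ▸ hv)
    have hv' := hv
    rw [hY, Finset.mem_sdiff, Finset.mem_union, List.mem_toFinset, not_or] at hv'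
    have hvW : v ∈ (A.erase v1).erase v2 := by
      simp only [Finset.mem_erase]
      exact ⟨fun h => hv'.2.2 (e6 v (by simp [h])), fun h => hv'.2.2 (e6 v (by simp [h])), hv'.1⟩
    rcases hcol u (e3' hu) v (hYA hv) hne with h | h
    · exact absurd ⟨e3' hu, hYA hv, hne, h⟩ (e7 u hu v hvW hv'.2.1 hv'.2.2)
    · exact h
  have hno := hg.noInner hs ht e3' hYA hd hj (by omega) (by omega)
  have hcl : ∀ x ∈ X, ∀ y ∈ X, x ≠ y → E c A r x y := fun x hx y hy hne =>
    ⟨e3' hx, e3' hy, hne, (hcol x (e3' hx) y (e3' hy) hne).resolve_right (hno x hx y hy hne)⟩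
  obtain ⟨l', hl', hlen'⟩ := cliqueExt (X.card - 1) X x l e1 e2 hcl
    (card_sdiff_self e2 e5).ge
  have := hr.1 rfl _ hl'
  have hno2 := hg.noInner hs ht hYA e3' hd.symm
    (fun y hy x hx => by rw [hs]; exact hj x hx y hy) (by omega) (by omega)
  obtain ⟨l2, hl2, hlen2⟩ := cliquePP (c := c) (i := r) hYA (fun x hx y hy hne =>
    (hcol x (hYA hx) y (hYA hy) hne).resolve_right (hno2 x hx y hy hne)) (by omega)
  have := hr.1 rfl _ hl2
  omega

lemma two_not_conn (hs : ∀ x y, c x y = c y x) (ht : 4 ≤ t)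
    (hcol : ∀ x ∈ A, ∀ y ∈ A, x ≠ y → c x y = r ∨ c x y = s)
    (hr : Good t c A r 0) (hg : Good t c A s 0) (hn : 2 * t - 1 ≤ A.card)
    {v1 v2 v3 : V} (t1 : E c A r v1 v2) (t2 : E c A r v2 v3) (t3 : E c A r v1 v3)
    (hc : Conn c A r) : False := by
  by_cases h3 : ∀ D ⊆ (A.erase v1).erase v2, v3 ∈ D → (∀ x ∈ D, ∀ y ∈ (A.erase v1).erase v2 \ D,
      ¬ E c A r x y) → (t + 1) / 2 ≤ D.card
  · exact two_core hs ht hcol hr hg hn t1 t2 t3 h3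
  by_cases h2 : ∀ D ⊆ (A.erase v1).erase v3, v2 ∈ D → (∀ x ∈ D, ∀ y ∈ (A.erase v1).erase v3 \ D,
      ¬ E c A r x y) → (t + 1) / 2 ≤ D.card
  · exact two_core hs ht hcol hr hg hn t3 (t2.symm hs) t1 h2
  by_cases h1 : ∀ D ⊆ (A.erase v2).erase v3, v1 ∈ D → (∀ x ∈ D, ∀ y ∈ (A.erase v2).erase v3 \ D,
      ¬ E c A r x y) → (t + 1) / 2 ≤ D.card
  · exact two_core hs ht hcol hr hg hn t2 (t3.symm hs) (t1.symm hs) h1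
  push Not at h1 h2 h3
  obtain ⟨D1, a1, b1, c1, d1⟩ := h1
  obtain ⟨D2, a2, b2, c2, d2⟩ := h2
  obtain ⟨D3, a3, b3, c3, d3⟩ := h3
  have hsub : ∀ {u v : V} {D : Finset V}, D ⊆ (A.erase u).erase v → D ⊆ A := fun h =>
    h.trans ((Finset.erase_subset _ _).trans (Finset.erase_subset _ _))
  have := hc (D1 ∪ D2 ∪ D3)
    (Finset.union_subset (Finset.union_subset (hsub a1) (hsub a2)) (hsub a3))
    ⟨v1, by simp [b1]⟩ (by
      intro x hx y hy hyD hxy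
      simp only [Finset.mem_union, not_or] at hx hyD
      have n1 : y ≠ v1 := fun h => hyD.1.1 (h ▸ b1)
      have n2 : y ≠ v2 := fun h => hyD.1.2 (h ▸ b2)
      have n3 : y ≠ v3 := fun h => hyD.2 (h ▸ b3)
      rcases hx with (hx | hx) | hx
      · exact c1 x hx y (by simp [*]) ⟨hsub a1 hx, hy, fun h => hyD.1.1 (h ▸ hx), hxy⟩
      · exact c2 x hx y (by simp [*]) ⟨hsub a2 hx, hy, fun h => hyD.1.2 (h ▸ hx), hxy⟩
      · exact c3 x hx y (by simp [*]) ⟨hsub a3 hx, hy, fun h => hyD.2 (h ▸ hx), hxy⟩)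
  have e1 := Finset.card_union_le (D1 ∪ D2) D3
  have e2 := Finset.card_union_le D1 D2
  rw [this] at e1
  omega

lemma two_tri (hs : ∀ x y, c x y = c y x) (ht : 4 ≤ t) (hrs : r ≠ s)
    (hcol : ∀ x ∈ A, ∀ y ∈ A, x ≠ y → c x y = r ∨ c x y = s)
    (hg : Good t c A s 0) (hn : 2 * t - 1 ≤ A.card) :
    ∃ v1 v2 v3, E c A r v1 v2 ∧ E c A r v2 v3 ∧ E c A r v1 v3 := by
  by_contra hno
  push Not at hno
  have hdeg : ∀ x ∈ A, t - 1 ≤ (A.filter (fun y => E c A s x y)).card := by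
    intro x hx
    have h1 : (A.filter (fun y => E c A r x y)).card < t := by
      by_contra hcon
      obtain ⟨l, hl, hlen⟩ := cliquePP (c := c) (i := s) (A := A)
        (X := A.filter (fun y => E c A r x y)) (Finset.filter_subset _ _) (by
          intro u hu v hv hne
          simp only [Finset.mem_filter] at hu hv
          refine (hcol u hu.1 v hv.1 hne).resolve_left (fun h => ?_)
          exact hno x u v hu.2 ⟨hu.1, hv.1, hne, h⟩ hv.2) (by omega)
      have := hg.1 rfl _ hl
      omega
    have h2 : A ⊆ insert x (A.filter (fun y => E c A r x y) ∪ A.filter (fun y => E c A s x y)) := by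
      intro y hy
      simp only [Finset.mem_insert, Finset.mem_union, Finset.mem_filter]
      by_cases hxy : y = x
      · exact Or.inl hxy
      · rcases hcol x hx y hy (Ne.symm hxy) with h | h
        · exact Or.inr (Or.inl ⟨hy, hx, hy, Ne.symm hxy, h⟩)
        · exact Or.inr (Or.inr ⟨hy, hx, hy, Ne.symm hxy, h⟩)
    have h3 := Finset.card_le_card h2
    have h4 := Finset.card_insert_le x (A.filter (fun y => E c A r x y) ∪ A.filter (fun y => E c A s x y))
    have h5 := Finset.card_union_le (A.filter (fun y => E c A r x y)) (A.filter (fun y => E c A s x y))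
    omega
  by_cases htri : ∃ v1 v2 v3, E c A s v1 v2 ∧ E c A s v2 v3 ∧ E c A s v1 v3
  · obtain ⟨v1, v2, v3, h1, h2, h3⟩ := htri
    obtain ⟨l, hl, hlen⟩ := greedy (R := E c A s) (B := Tri (E c A s)) E.irr (t - 1) A hdeg t v1
      [v2, v3] (Ext.base _ ⟨_, _, _, rfl, h1, h2, h3⟩) h1.1 (by omega)
    have := hg.1 rfl _ hl
    omega
  · push Not at htri
    obtain ⟨x, hx⟩ : A.Nonempty := by rw [← Finset.card_pos]; omega
    have := hdeg x hx
    obtain ⟨u, v, w, hu, hv, hw, huv, huw, hvw⟩ := Finset.two_lt_card_iff.1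
      (show 2 < (A.filter (fun y => E c A s x y)).card by omega)
    simp only [Finset.mem_filter] at hu hv hw
    have key : ∀ u v, E c A s x u → E c A s x v → u ≠ v → E c A r u v := fun u v hu hv hne =>
      ⟨hu.2.1, hv.2.1, hne, (hcol u hu.2.1 v hv.2.1 hne).resolve_right
        (fun h => htri x u v hu ⟨hu.2.1, hv.2.1, hne, h⟩ hv)⟩
    exact hno u v w (key _ _ hu.2 hv.2 huv) (key _ _ hv.2 hw.2 hvw) (key _ _ hu.2 hw.2 huw)

lemma conn_or (hs : ∀ x y, c x y = c y x) (hrs : r ≠ s)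
    (hcol : ∀ x ∈ A, ∀ y ∈ A, x ≠ y → c x y = r ∨ c x y = s) : Conn c A r ∨ Conn c A s := by
  by_contra hcon
  rw [not_or] at hcon
  obtain ⟨h1, h2⟩ := hcon
  unfold Conn at h1 h2
  push Not at h1 h2
  obtain ⟨D, hD, ⟨d, hd⟩, hDc, hDA⟩ := h1
  obtain ⟨F, hF, ⟨x, hx⟩, hFc, hFA⟩ := h2
  obtain ⟨y, hyA, hy⟩ := Finset.exists_of_ssubset (hD.ssubset_of_ne hDA)
  obtain ⟨z, hzA, hz⟩ := Finset.exists_of_ssubset (hF.ssubset_of_ne hFA)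
  have k1 : ∀ u ∈ D, ∀ v ∈ A, v ∉ D → c u v = s := fun u hu v hv hvD =>
    (hcol u (hD hu) v hv (fun h => hvD (h ▸ hu))).resolve_left (hDc u hu v hv hvD)
  have k2 : ∀ u ∈ F, ∀ v ∈ A, v ∉ F → c u v = r := fun u hu v hv hvD =>
    (hcol u (hF hu) v hv (fun h => hvD (h ▸ hu))).resolve_right (hFc u hu v hv hvD)
  by_cases hxD : x ∈ D
  · have hyF : y ∈ F := by
      by_contra hyF
      exact hrs ((k2 x hx y hyA hyF).symm.trans (k1 x hxD y hyA hy))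
    have hzD : z ∈ D := by
      by_contra hzD
      exact hrs ((k2 x hx z hzA hz).symm.trans (k1 x hxD z hzA hzD))
    exact hrs ((k2 y hyF z hzA hz).symm.trans (by rw [hs]; exact k1 z hzD y hyA hy))
  · have hDF : ∀ u ∈ D, u ∈ F := by
      intro u hu
      by_contra huF
      exact hrs ((k2 x hx u (hD hu) huF).symm.trans (by rw [hs]; exact k1 u hu x (hF hx) hxD))
    have hzD : z ∉ D := fun h => hz (hDF z h)
    exact hrs ((k2 d (hDF d hd) z hzA hz).symm.trans (k1 d hd z hzA hzD))

lemma two_zero (hs : ∀ x y, c x y = c y x) (ht : 4 ≤ t) (hrs : r ≠ s)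
    (hcol : ∀ x ∈ A, ∀ y ∈ A, x ≠ y → c x y = r ∨ c x y = s)
    (hr : Good t c A r 0) (hg : Good t c A s 0) : A.card + 1 ≤ 2 * t - 1 := by
  by_contra hn
  have hcol' : ∀ x ∈ A, ∀ y ∈ A, x ≠ y → c x y = s ∨ c x y = r := fun x hx y hy h =>
    (hcol x hx y hy h).symm
  obtain ⟨v1, v2, v3, a1, a2, a3⟩ := two_tri hs ht hrs hcol hg (by omega)
  obtain ⟨w1, w2, w3, b1, b2, b3⟩ := two_tri hs ht hrs.symm hcol' hr (by omega)
  rcases conn_or hs hrs hcol with h | h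
  · exact two_not_conn hs ht hcol hr hg (by omega) a1 a2 a3 h
  · exact two_not_conn hs ht hcol' hg hr (by omega) b1 b2 b3 h

/-- the case of two colors -/
lemma two (hs : ∀ x y, c x y = c y x) (ht : 4 ≤ t) (hrs : r ≠ s)
    (hcol : ∀ x ∈ A, ∀ y ∈ A, x ≠ y → c x y = r ∨ c x y = s) {br bs : ℕ}
    (hr : Good t c A r br) (hg : Good t c A s bs) (hbr : 2 * br + 1 ≤ t)
    (hbs : 2 * bs + 1 ≤ t) : A.card + (br + bs) ≤ (t - 1) * 2 := by
  rcases Nat.eq_zero_or_pos br with rfl | h1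
  · rcases Nat.eq_zero_or_pos bs with rfl | h2
    · have := two_zero hs ht hrs hcol hr hg
      omega
    · have := two_pos hs ht (fun x hx y hy h => (hcol x hx y hy h).symm) hg hr h2 hbs hbr
      omega
  · have := two_pos hs ht hcol hr hg h1 hbr hbs
    omega

/-- the case of one color -/
lemma one (ht : 4 ≤ t) (hcol : ∀ x ∈ A, ∀ y ∈ A, x ≠ y → c x y = r) {br : ℕ}
    (hr : Good t c A r br) (hbr : 2 * br + 1 ≤ t) : A.card + br ≤ t - 1 := by
  by_contra hcon
  rcases Nat.eq_zero_or_pos br with rfl | h1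
  · obtain ⟨l, hl, hlen⟩ := cliquePP (A := A) subset_rfl hcol (by omega)
    have := hr.1 rfl _ hl
    omega
  · obtain ⟨l, hl, hlen⟩ := cliquePA (A := A) subset_rfl hcol (by omega)
    have := hr.2 h1 _ hl
    omega

end Two
end GR

namespace GR
open scoped Classical
section Gallai
variable {V C : Type*} {c : V → V → C} {A A' : Finset V} {i r s : C} {t : ℕ}

/-- no rainbow triangle in `A` -/
def Gal (c : V → V → C) (A : Finset V) : Prop :=
  ∀ x ∈ A, ∀ y ∈ A, ∀ z ∈ A, x ≠ y → x ≠ z → y ≠ z → c x y = c x z ∨ c x y = c y z ∨ c x z = c y z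

lemma Gal.mono (hA : A ⊆ A') (h : Gal c A') : Gal c A := fun x hx y hy z hz =>
  h x (hA hx) y (hA hy) z (hA hz)

/-- no edges of color `i` leave `D` in `A` -/
def Closed (c : V → V → C) (A : Finset V) (i : C) (D : Finset V) : Prop :=
  ∀ x ∈ D, ∀ y ∈ A, y ∉ D → c x y ≠ i

lemma Closed.compl (hs : ∀ x y, c x y = c y x) {D : Finset V} (hD : D ⊆ A) (h : Closed c A i D) :
    Closed c A i (A \ D) := by
  intro x hx y hy hyD hxy
  simp only [Finset.mem_sdiff, not_and, not_not] at hx hyD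
  exact h y (hyD hy) x hx.1 hx.2 (by rw [hs]; exact hxy)

lemma comp (hs : ∀ x y, c x y = c y x) (hG : Gal c A) (i : C) {x : V} (hx : x ∈ A) :
    ∃ D ⊆ A, x ∈ D ∧ Closed c A i D ∧ (∀ F ⊆ A, x ∈ F → Closed c A i F → D ⊆ F) ∧
      ∀ z ∈ A, z ∉ D → ∀ u ∈ D, ∀ v ∈ D, c z u = c z v := by
  obtain ⟨D, hD⟩ : ∃ D, D = A.filter (fun y => ∀ F ⊆ A, x ∈ F → Closed c A i F → y ∈ F) := ⟨_, rfl⟩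
  have hDA : D ⊆ A := by rw [hD]; exact Finset.filter_subset _ _
  have hmem : ∀ y, y ∈ D ↔ y ∈ A ∧ ∀ F ⊆ A, x ∈ F → Closed c A i F → y ∈ F := by
    intro y; rw [hD, Finset.mem_filter]
  have hmin : ∀ F ⊆ A, x ∈ F → Closed c A i F → D ⊆ F := fun F hF hxF hcl y hy =>
    ((hmem y).1 hy).2 F hF hxF hcl
  have hxD : x ∈ D := (hmem x).2 ⟨hx, fun F _ h _ => h⟩
  have hcl : Closed c A i D := by
    intro y hy w hw hwD hyw
    apply hwD
    refine (hmem w).2 ⟨hw, fun F hF hxF hFc => ?_⟩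
    by_contra hwF
    exact hFc y (((hmem y).1 hy).2 F hF hxF hFc) w hw hwF hyw
  refine ⟨D, hDA, hxD, hcl, hmin, ?_⟩
  intro z hz hzD
  have : D ⊆ D.filter (fun u => c z u = c z x) := by
    apply hmin _ ((Finset.filter_subset _ _).trans hDA) (by simp [hxD])
    intro u hu v hv hvF huv
    rw [Finset.mem_filter] at hu hvF
    have hvD : v ∈ D := by
      by_contra hvD
      exact hcl u hu.1 v hv hvD huv
    have hzv : c z v ≠ c z u := fun h => hvF ⟨hvD, h.trans hu.2⟩
    have huz := hcl u hu.1 z hz hzD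
    have hvz := hcl v hvD z hz hzD
    have n1 : z ≠ u := fun h => hzD (h ▸ hu.1)
    have n2 : z ≠ v := fun h => hzD (h ▸ hvD)
    have n3 : u ≠ v := fun h => hzv (by rw [h])
    rcases hG z hz u (hDA hu.1) v hv n1 n2 n3 with h | h | h
    · exact hzv h.symm
    · exact huz (by rw [hs, h]; exact huv)
    · exact hvz (by rw [hs, h]; exact huv)
  intro u hu v hv
  rw [(Finset.mem_filter.1 (this hu)).2, (Finset.mem_filter.1 (this hv)).2]

lemma three_core (hs : ∀ x y, c x y = c y x) (hG : Gal c A) {v : V} (hv : v ∈ A) {i j k : C}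
    (hij : i ≠ j) (hik : i ≠ k) (hjk : j ≠ k) (h2 : 2 ≤ A.card) (ci : Conn c A i) (cj : Conn c A j)
    (ck : Conn c A k) (hn : ¬ Conn c (A.erase v) i) : False := by
  have hsub : A.erase v ⊆ A := Finset.erase_subset _ _
  have hG' := hG.mono hsub
  have nb : ∀ j, Conn c A j → ∃ x ∈ A.erase v, c v x = j := by
    intro j hj
    by_contra hcon
    push Not at hcon
    have := hj {v} (by simpa using hv) (by simp) (by
      intro x hx y hy hyv
      simp only [Finset.mem_singleton] at hx hyv
      subst hx
      exact hcon y (by simp [hy, hyv]))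
    rw [← this] at h2
    simp at h2
  have hone : ∀ D ⊆ A.erase v, D.Nonempty → Closed c (A.erase v) i D → ∃ d ∈ D, c v d = i := by
    intro D hD hne hcl
    by_contra hcon
    push Not at hcon
    have := ci D (hD.trans hsub) hne (by
      intro x hx y hy hyD
      by_cases hyv : y = v
      · subst hyv; rw [hs]; exact hcon x hx
      · exact hcl x hx y (by simp [hy, hyv]) hyD)
    rw [← this] at hv
    have := hD hv
    simp at this
  obtain ⟨x, hx, hvx⟩ := nb j cj
  obtain ⟨y, hy, hvy⟩ := nb k ck
  obtain ⟨D, hDA, hxD, hDcl, hDmin, hDc⟩ := comp hs hG' i hx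
  obtain ⟨F, hFA, hyF, hFcl, hFmin, hFc⟩ := comp hs hG' i hy
  have hDne : D ≠ A.erase v := by
    rintro rfl
    apply hn
    intro F hF hFne hFcl
    by_cases hxF : x ∈ F
    · exact hF.antisymm (hDmin F hF hxF hFcl)
    · have := hDmin (A.erase v \ F) Finset.sdiff_subset (by simp only [Finset.mem_sdiff]; exact ⟨hx, hxF⟩)
        (Closed.compl hs hF hFcl)
      obtain ⟨w, hw⟩ := hFne
      exact absurd hw (Finset.mem_sdiff.1 (this (hF hw))).2
  have hDcl' := Closed.compl hs hDA hDcl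
  obtain ⟨w, hwA, hwD⟩ := Finset.exists_of_ssubset (hDA.ssubset_of_ne hDne)
  -- a color-forcing fact
  have force : ∀ a b j', a ∈ A.erase v → b ∈ A.erase v → a ≠ b → c v a = j' → j' ≠ i →
      c v b = i → c a b ≠ i → c a b = j' := by
    intro a b j' ha hb hab hva hj hvb hcab
    have ha' := Finset.mem_erase.1 ha
    have hb' := Finset.mem_erase.1 hb
    rcases hG v hv a ha'.2 b hb'.2 ha'.1.symm hb'.1.symm hab with h | h | h
    · exact absurd (hva.symm.trans (h.trans hvb)) hj
    · exact h.symm.trans hva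
    · exact absurd (h.symm.trans hvb) hcab
  obtain ⟨z, hz, hvz⟩ := hone _ Finset.sdiff_subset ⟨w, Finset.mem_sdiff.2 ⟨hwA, hwD⟩⟩ hDcl'
  rw [Finset.mem_sdiff] at hz
  have hxz := force x z j hx hz.1 (fun h => hz.2 (h ▸ hxD)) hvx hij.symm hvz
    (hDcl x hxD z hz.1 hz.2)
  by_cases hyD : y ∈ D
  · have hyz := force y z k hy hz.1 (fun h => hz.2 (h ▸ hyD)) hvy hik.symm hvz
      (hDcl y hyD z hz.1 hz.2)
    have := hDc z hz.1 hz.2 x hxD y hyD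
    rw [hs, hxz, hs, hyz] at this
    exact hjk this
  · obtain ⟨z', hz', hvz'⟩ := hone D hDA ⟨x, hxD⟩ hDcl
    have h1 := force y z' k hy (hDA hz') (fun h => hyD (h ▸ hz')) hvy hik.symm hvz'
      (by rw [hs]; exact hDcl z' hz' y hy hyD)
    have h2 := hDc y hy hyD x hxD z' hz'
    have hFD := hFmin _ Finset.sdiff_subset (Finset.mem_sdiff.2 ⟨hy, hyD⟩) hDcl'
    have hxF : x ∉ F := fun h => (Finset.mem_sdiff.1 (hFD h)).2 hxD
    obtain ⟨z'', hz'', hvz''⟩ := hone F hFA ⟨y, hyF⟩ hFcl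
    have h3 := force x z'' j hx (hFA hz'') (fun h => hxF (h ▸ hz'')) hvx hij.symm hvz''
      (by rw [hs]; exact hFcl z'' hz'' x hx hxF)
    have h4 := hFc x hx hxF y hyF z'' hz''
    rw [hs, h2, h1, h3] at h4
    exact hjk h4.symm

lemma three (hs : ∀ x y, c x y = c y x) (n : ℕ) : ∀ A : Finset V, A.card = n → 2 ≤ A.card →
    Gal c A → ∀ {i j k : C}, i ≠ j → i ≠ k → j ≠ k → Conn c A i → Conn c A j → Conn c A k →
    False := by
  induction n with
  | zero => intro A hA h2; omega
  | succ n ih =>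
    intro A hA h2 hG i j k hij hik hjk ci cj ck
    obtain ⟨v, hv⟩ : A.Nonempty := by rw [← Finset.card_pos]; omega
    have hcard := Finset.card_erase_of_mem hv
    by_cases h3 : 2 ≤ (A.erase v).card
    · by_cases h : Conn c (A.erase v) i
      · by_cases h' : Conn c (A.erase v) j
        · by_cases h'' : Conn c (A.erase v) k
          · exact ih (A.erase v) (by omega) h3 (hG.mono (Finset.erase_subset _ _)) hij hik hjk h h' h''
          · exact three_core hs hG hv hik.symm hjk.symm hij h2 ck ci cj h''
        · exact three_core hs hG hv hij.symm hjk hik h2 cj ci ck h'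
      · exact three_core hs hG hv hij hik hjk h2 ci cj ck h
    · obtain ⟨w, hw⟩ := Finset.card_eq_one.1 (show (A.erase v).card = 1 by omega)
      have key : ∀ i, Conn c A i → c v w = i := by
        intro i hi
        by_contra hcon
        have := hi {v} (by simpa using hv) (by simp) (by
          intro x hx y hy hyv
          simp only [Finset.mem_singleton] at hx hyv
          have : y ∈ A.erase v := by simp [hy, hyv]
          rw [hw, Finset.mem_singleton] at this
          rw [hx, this]; exact hcon)
        rw [← this] at h2
        simp at h2
      exact hij ((key i ci).symm.trans (key j cj))

/-- a partition in two classes with a single color between them -/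
def MonoCut (c : V → V → C) (A : Finset V) : Prop :=
  ∃ A1 A2 : Finset V, ∃ i : C, A1.Nonempty ∧ A2.Nonempty ∧ Disjoint A1 A2 ∧ A1 ∪ A2 = A ∧
    ∀ x ∈ A1, ∀ y ∈ A2, c x y = i

/-- Gallai partition with reduced colors `r` and `s`, parts being the fibers of `p` -/
def Part (c : V → V → C) (A : Finset V) (r s : C) (p : V → V) : Prop :=
  (∃ x ∈ A, ∃ y ∈ A, p x ≠ p y) ∧
  (∀ x ∈ A, ∀ y ∈ A, ∀ x' ∈ A, ∀ y' ∈ A, p x = p x' → p y = p y' → p x ≠ p y → c x y = c x' y') ∧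
  (∀ x ∈ A, ∀ y ∈ A, p x ≠ p y → c x y = r ∨ c x y = s)

lemma gallai (hs : ∀ x y, c x y = c y x) (n : ℕ) : ∀ A : Finset V, A.card = n → 2 ≤ A.card →
    Gal c A → MonoCut c A ∨ ∃ r s p, Part c A r s p := by
  induction n using Nat.strong_induction_on with
  | _ n ih =>
  intro A hA h2 hG
  by_cases hM : ∃ M ⊆ A, 2 ≤ M.card ∧ M.card < A.card ∧
    ∀ z ∈ A, z ∉ M → ∀ u ∈ M, ∀ v ∈ M, c z u = c z v
  · obtain ⟨M, hMA, hM2, hMc, hMod⟩ := hM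
    obtain ⟨m, hm⟩ : M.Nonempty := by rw [← Finset.card_pos]; omega
    obtain ⟨q, hq⟩ : ∃ q : V → V, q = fun x => if x ∈ M then m else x := ⟨_, rfl⟩
    obtain ⟨A', hA'⟩ : ∃ A', A' = insert m (A \ M) := ⟨_, rfl⟩
    have hA'A : A' ⊆ A := by
      rw [hA']; exact Finset.insert_subset (hMA hm) Finset.sdiff_subset
    have hA'c : A'.card = (A \ M).card + 1 := by
      rw [hA']; exact Finset.card_insert_of_notMem (by simp [hm])
    have hcard := Finset.card_sdiff_add_card_eq_card hMA
    have hqA' : ∀ x ∈ A, q x ∈ A' := by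
      intro x hx
      rw [hq, hA']
      by_cases hxM : x ∈ M
      · simp [hxM]
      · simp [hxM, hx]
    have hqid : ∀ x ∈ A', q x = x := by
      intro x hx
      rw [hA', Finset.mem_insert, Finset.mem_sdiff] at hx
      rw [hq]
      rcases hx with rfl | hx
      · simp
      · simp [hx.2]
    have hqc : ∀ x ∈ A, ∀ y ∈ A, q x ≠ q y → c x y = c (q x) (q y) := by
      intro x hx y hy hne
      by_cases hxM : x ∈ M
      · by_cases hyM : y ∈ M
        · exact absurd (by simp [hq, hxM, hyM]) hne
        · simp only [hq, hxM, hyM, if_true, if_false]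
          rw [hs x, hs m]; exact hMod y hy hyM x hxM m hm
      · by_cases hyM : y ∈ M
        · simp only [hq, hxM, hyM, if_true, if_false]
          exact hMod x hx hxM y hyM m hm
        · simp only [hq, hxM, hyM, if_false]
    rcases ih A'.card (by omega) A' rfl (by omega) (hG.mono hA'A) with h | ⟨r, s, p, h1, h2, h3⟩
    · left
      obtain ⟨A1, A2, i, ⟨x1, hx1⟩, ⟨x2, hx2⟩, hd, hU, hc⟩ := h
      have s1 : A1 ⊆ A' := by rw [← hU]; exact Finset.subset_union_left
      have s2 : A2 ⊆ A' := by rw [← hU]; exact Finset.subset_union_right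
      refine ⟨A.filter (fun x => q x ∈ A1), A.filter (fun x => q x ∈ A2), i,
        ⟨x1, by simp [hA'A (s1 hx1), hqid x1 (s1 hx1), hx1]⟩,
        ⟨x2, by simp [hA'A (s2 hx2), hqid x2 (s2 hx2), hx2]⟩, ?_, ?_, ?_⟩
      · rw [Finset.disjoint_left]
        intro a ha hb
        rw [Finset.mem_filter] at ha hb
        exact Finset.disjoint_left.1 hd ha.2 hb.2
      · ext a
        simp only [Finset.mem_union, Finset.mem_filter]
        constructor
        · rintro (h | h) <;> exact h.1
        · intro ha
          have := hqA' a ha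
          rw [← hU, Finset.mem_union] at this
          tauto
      · intro x hx y hy
        rw [Finset.mem_filter] at hx hy
        rw [hqc x hx.1 y hy.1 (fun h => Finset.disjoint_left.1 hd hx.2 (h ▸ hy.2))]
        exact hc _ hx.2 _ hy.2
    · right
      refine ⟨r, s, fun x => p (q x), ?_, ?_, ?_⟩
      · obtain ⟨x, hx, y, hy, hne⟩ := h1
        exact ⟨x, hA'A hx, y, hA'A hy, by beta_reduce; rw [hqid x hx, hqid y hy]; exact hne⟩
      · intro x hx y hy x' hx' y' hy' e1 e2 hne
        rw [hqc x hx y hy (fun h => hne (by simp only [h])),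
          hqc x' hx' y' hy' (fun h => hne (by simp only [e1, e2, h]))]
        exact h2 _ (hqA' x hx) _ (hqA' y hy) _ (hqA' x' hx') _ (hqA' y' hy') e1 e2 hne
      · intro x hx y hy hne
        rw [hqc x hx y hy (fun h => hne (by simp only [h]))]
        exact h3 _ (hqA' x hx) _ (hqA' y hy) hne
  · right
    push Not at hM
    have hconn : ∀ x ∈ A, ∀ y ∈ A, x ≠ y → Conn c A (c x y) := by
      intro x hx y hy hxy
      obtain ⟨D, hDA, hxD, hDcl, hDmin, hDc⟩ := comp hs hG (c x y) hx
      have hyD : y ∈ D := by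
        by_contra h
        exact hDcl x hxD y hy h rfl
      have hD2 : 2 ≤ D.card := Finset.one_lt_card.2 ⟨x, hxD, y, hyD, hxy⟩
      have hDA' : D = A := by
        by_contra hne
        obtain ⟨z, hz, hzD, u, hu, v, hv, h⟩ := hM D hDA hD2
          (Finset.card_lt_card (hDA.ssubset_of_ne hne))
        exact h (hDc z hz hzD u hu v hv)
      subst hDA'
      intro F hF hFne hFcl
      by_cases hxF : x ∈ F
      · exact hF.antisymm (hDmin F hF hxF hFcl)
      · have := hDmin (D \ F) Finset.sdiff_subset (by simp only [Finset.mem_sdiff]; exact ⟨hx, hxF⟩)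
          (Closed.compl hs hF hFcl)
        obtain ⟨w, hw⟩ := hFne
        exact absurd hw (Finset.mem_sdiff.1 (this (hF hw))).2
    obtain ⟨x, hx, y, hy, hxy⟩ := Finset.one_lt_card.1 (show 1 < A.card by omega)
    by_cases hex : ∃ u ∈ A, ∃ v ∈ A, u ≠ v ∧ c u v ≠ c x y
    · obtain ⟨u, hu, v, hv, huv, hne⟩ := hex
      refine ⟨c x y, c u v, id, ⟨x, hx, y, hy, hxy⟩, ?_, ?_⟩
      · rintro a _ b _ a' _ b' _ h1 h2 _
        simp only [id] at h1 h2
        rw [h1, h2]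
      · intro a ha b hb hab
        simp only [id] at hab
        by_contra hcon
        rw [not_or] at hcon
        exact three hs A.card A rfl h2 hG hne (Ne.symm hcon.2) (Ne.symm hcon.1) (hconn u hu v hv huv)
          (hconn x hx y hy hxy) (hconn a ha b hb hab)
    · push Not at hex
      refine ⟨c x y, c x y, id, ⟨x, hx, y, hy, hxy⟩, ?_, ?_⟩
      · rintro a _ b _ a' _ b' _ h1 h2 _
        simp only [id] at h1 h2
        rw [h1, h2]
      · intro a ha b hb hab
        exact Or.inl (hex a ha b hb hab)

end Gallai
end GR

namespace GR
open scoped Classical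
section Prep
variable {V C : Type*} {c : V → V → C} {A D : Finset V} {i r s : C} {t : ℕ} {K : Finset C} {b : C → ℕ}

/-- the sequence 1, 2, 5, 10, 25, 50, ... -/
def h : ℕ → ℕ
  | 0 => 1
  | 1 => 2
  | (n + 2) => 5 * h n

lemma h_facts (n : ℕ) : 1 ≤ h n ∧ 2 * h n ≤ h (n + 1) ∧ h (n + 1) + 1 ≤ 3 * h n := by
  induction n using Nat.strong_induction_on with
  | _ n ih =>
    match n with
    | 0 => simp [h]
    | 1 => simp [h]
    | (m + 2) =>
      have := ih m (by omega)
      simp only [h]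
      omega

lemma h_lin (n : ℕ) : n + 10 ≤ 2 * h (n + 2) := by
  induction n with
  | zero => simp [h]
  | succ n ih =>
    have := h_facts (n + 2)
    have e : n + 1 + 2 = n + 2 + 1 := by omega
    rw [e]
    omega

/-- the extremal function -/
def G (t j : ℕ) : ℕ := (t - 1) * h (j - 1)

lemma G_facts (t j : ℕ) (hj : 1 ≤ j) : t - 1 ≤ G t j ∧ 2 * G t j ≤ G t (j + 1) ∧
    G t (j + 1) + (t - 1) ≤ 3 * G t j ∧ G t (j + 2) = 5 * G t j := by
  obtain ⟨n, rfl⟩ : ∃ n, j = n + 1 := ⟨j - 1, by omega⟩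
  have hf := h_facts n
  simp only [G, Nat.add_sub_cancel, show n + 1 + 1 - 1 = n + 1 by omega,
    show n + 1 + 2 - 1 = n + 2 by omega]
  refine ⟨?_, ?_, ?_, ?_⟩
  · exact Nat.le_mul_of_pos_right _ hf.1
  · calc 2 * ((t - 1) * h n) = (t - 1) * (2 * h n) := by ring
      _ ≤ _ := Nat.mul_le_mul_left _ hf.2.1
  · calc (t - 1) * h (n + 1) + (t - 1) = (t - 1) * (h (n + 1) + 1) := by ring
      _ ≤ (t - 1) * (3 * h n) := Nat.mul_le_mul_left _ hf.2.2
      _ = _ := by ring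
  · simp only [h]; ring

lemma G_lin (t j : ℕ) (hj : 3 ≤ j) : (t - 1) * (j - 2) + 9 * (t - 1) ≤ 2 * G t j := by
  obtain ⟨n, rfl⟩ : ∃ n, j = n + 3 := ⟨j - 3, by omega⟩
  have := h_lin n
  simp only [G, show n + 3 - 1 = n + 2 by omega, show n + 3 - 2 = n + 1 by omega]
  calc (t - 1) * (n + 1) + 9 * (t - 1) = (t - 1) * (n + 10) := by ring
    _ ≤ (t - 1) * (2 * h (n + 2)) := Nat.mul_le_mul_left _ this
    _ = _ := by ring

/-- standing hypotheses -/
def Hyp (t : ℕ) (c : V → V → C) (A : Finset V) (K : Finset C) (b : C → ℕ) : Prop :=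
  K.Nonempty ∧ (∀ x ∈ A, ∀ y ∈ A, x ≠ y → c x y ∈ K) ∧
    ∀ i ∈ K, 2 * b i + 1 ≤ t ∧ Good t c A i (b i)

/-- the main claim for the set `A` -/
def Cl (t : ℕ) (c : V → V → C) (A : Finset V) : Prop :=
  ∀ K b, Hyp t c A K b → A.card + ∑ i ∈ K, b i ≤ G t K.card

/-- color `i` does not appear inside `D` -/
def Free (c : V → V → C) (D : Finset V) (i : C) : Prop :=
  ∀ x ∈ D, ∀ y ∈ D, x ≠ y → c x y ≠ i

lemma Free.mono {D' : Finset V} (h : Free c D i) (hD : D' ⊆ D) : Free c D' i :=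
  fun x hx y hy => h x (hD hx) y (hD hy)

lemma Hyp.sub (hH : Hyp t c A K b) (hD : D ⊆ A) : Hyp t c D K b :=
  ⟨hH.1, fun x hx y hy => hH.2.1 x (hD hx) y (hD hy), fun i hi =>
    ⟨(hH.2.2 i hi).1, (hH.2.2 i hi).2.mono hD⟩⟩

lemma Hyp.erase (hH : Hyp t c A K b) (hf : Free c A i) (hi : i ∈ K) (hK : 2 ≤ K.card) :
    Hyp t c A (K.erase i) b := by
  refine ⟨?_, ?_, ?_⟩
  · rw [← Finset.card_pos, Finset.card_erase_of_mem hi]; omega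
  · intro x hx y hy hne
    exact Finset.mem_erase.2 ⟨hf x hx y hy hne, hH.2.1 x hx y hy hne⟩
  · intro j hj
    exact hH.2.2 j (Finset.mem_of_mem_erase hj)

lemma Hyp.update (hH : Hyp t c A K b) {m : ℕ} (h : 2 * (b i + m) + 1 ≤ t ∧ Good t c A i (b i + m)) :
    Hyp t c A K (Function.update b i (b i + m)) := by
  refine ⟨hH.1, hH.2.1, ?_⟩
  intro j hj
  by_cases hji : j = i
  · subst hji; simpa using h
  · rw [Function.update_of_ne hji]; exact hH.2.2 j hj

lemma sum_update (hi : i ∈ K) (m : ℕ) :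
    ∑ j ∈ K, Function.update b i (b i + m) j = ∑ j ∈ K, b j + m := by
  rw [← Finset.add_sum_erase K _ hi, ← Finset.add_sum_erase K b hi]
  have : ∑ j ∈ K.erase i, Function.update b i (b i + m) j = ∑ j ∈ K.erase i, b j := by
    apply Finset.sum_congr rfl
    intro j hj
    rw [Function.update_of_ne (Finset.ne_of_mem_erase hj)]
  rw [this]; simp; omega

lemma Hyp.bound (hH : Hyp t c A K b) (K' : Finset C) (hK : K' ⊆ K) :
    2 * ∑ i ∈ K', b i ≤ (t - 1) * K'.card := by
  rw [Finset.mul_sum, mul_comm]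
  apply Finset.sum_le_card_nsmul
  intro i hi
  have := (hH.2.2 i (hK hi)).1
  omega

lemma PP.toPA (hs : ∀ x y, c x y = c y x) {l : List V} (h : PP c A i l) : PA c A i l := by
  induction h with
  | base l hl =>
    obtain ⟨x, y, z, rfl, h1, h2, h3⟩ := hl
    refine Ext.cons y x [z] (Ext.cons z y [] (Ext.base _ ⟨z, h2.2.1, rfl⟩) ?_ (h2.symm hs)) ?_
      (h1.symm hs)
    · simp [h2.2.2.1]
    · simp [h1.2.2.1, h3.2.2.1]
  | cons x y l h hy hr ih => exact Ext.cons x y l ih hy hr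

lemma Good.noPP (hs : ∀ x y, c x y = c y x) {m : ℕ} (hg : Good t c A i m) {l : List V}
    (hl : PP c A i l) : l.length < t := by
  rcases Nat.eq_zero_or_pos m with rfl | hm
  · exact hg.1 rfl l hl
  · have := hg.2 hm l (hl.toPA hs)
    omega

/-- two large sets joined in color `i` -/
lemma bigpair (hs : ∀ x y, c x y = c y x) (ht : 4 ≤ t) {m : ℕ} (hg : Good t c A i m)
    {X Y : Finset V} (hX : X ⊆ A) (hY : Y ⊆ A)
    (hd : Disjoint X Y) (hj : ∀ x ∈ X, ∀ y ∈ Y, c x y = i)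
    (hXc : (t + 1) / 2 ≤ X.card) (hYc : (t + 1) / 2 ≤ Y.card) :
    m = 0 ∧ Free c X i ∧ Free c Y i := by
  have hm : m = 0 := by
    by_contra hm
    obtain ⟨l, hl, hlen⟩ := bipPA hs hX hY hd hj (t - 2 * m) (by omega) (by omega)
    have := hg.2 (by omega) l hl
    omega
  subst hm
  exact ⟨rfl, hg.noInner hs ht hX hY hd hj hXc (by omega),
    hg.noInner hs ht hY hX hd.symm (fun y hy x hx => by rw [hs]; exact hj x hx y hy) hYc (by omega)⟩

lemma Cl.erase (hC : Cl t c D) (hH : Hyp t c A K b) (hD : D ⊆ A) (hf : Free c D i) (hi : i ∈ K)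
    (hK : 2 ≤ K.card) : D.card + ∑ j ∈ K.erase i, b j ≤ G t (K.card - 1) := by
  have := hC _ _ ((hH.sub hD).erase hf hi hK)
  rwa [Finset.card_erase_of_mem hi] at this

lemma Cl.erase2 (hC : Cl t c D) (hH : Hyp t c A K b) (hD : D ⊆ A) (hf : Free c D r)
    (hg : Free c D s) (hr : r ∈ K) (hsK : s ∈ K) (hrs : r ≠ s)
    (hK : 3 ≤ K.card) : D.card + ∑ j ∈ (K.erase r).erase s, b j ≤ G t (K.card - 2) := by
  have hc := Finset.card_erase_of_mem hr
  have := hC _ _ (((hH.sub hD).erase hf hr (by omega)).erase hg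
    (Finset.mem_erase.2 ⟨hrs.symm, hsK⟩) (by omega))
  rwa [Finset.card_erase_of_mem (Finset.mem_erase.2 ⟨hrs.symm, hsK⟩), hc] at this

lemma cut_aux (hs : ∀ x y, c x y = c y x) (ht : 4 ≤ t) (hH : Hyp t c A K b) (hK : 3 ≤ K.card)
    (hn : 7 * (t - 1) < 2 * A.card)
    (ih : ∀ D ⊆ A, D.card < A.card → Cl t c D) {A1 A2 : Finset V} (h1 : A1.Nonempty)
    (h2 : A2.Nonempty) (hd : Disjoint A1 A2) (hU : A1 ∪ A2 = A)
    (hc : ∀ x ∈ A1, ∀ y ∈ A2, c x y = i) (hle : A2.card ≤ A1.card) :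
    A.card + ∑ i ∈ K, b i ≤ G t K.card := by
  have s1 : A1 ⊆ A := by rw [← hU]; exact Finset.subset_union_left
  have s2 : A2 ⊆ A := by rw [← hU]; exact Finset.subset_union_right
  have hcard : A.card = A1.card + A2.card := by rw [← hU, Finset.card_union_of_disjoint hd]
  have p1 := Finset.card_pos.2 h1
  have p2 := Finset.card_pos.2 h2
  obtain ⟨x, hx⟩ := h1
  obtain ⟨y, hy⟩ := h2
  have hi : i ∈ K := by
    have := hH.2.1 x (s1 hx) y (s2 hy) (fun h => Finset.disjoint_left.1 hd hx (h ▸ hy))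
    rwa [hc x hx y hy] at this
  have hG := G_facts t (K.card - 1) (by omega)
  rw [show K.card - 1 + 1 = K.card by omega] at hG
  by_cases hbig : (t + 1) / 2 ≤ A2.card
  · obtain ⟨hb, f1, f2⟩ := bigpair hs ht (hH.2.2 i hi).2 s1 s2 hd hc (by omega) hbig
    have e1 := (ih A1 s1 (by omega)).erase hH s1 f1 hi (by omega)
    have e2 := (ih A2 s2 (by omega)).erase hH s2 f2 hi (by omega)
    rw [← Finset.add_sum_erase K b hi, hb]
    omega
  · have hp := peel hs (hH.2.2 i hi).1 (hH.2.2 i hi).2 s1 s2 hd hc (by omega) (by omega) (by omega)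
    have := ih A1 s1 (by omega) _ _ ((hH.sub s1).update hp)
    rw [sum_update hi] at this
    omega

lemma cut (hs : ∀ x y, c x y = c y x) (ht : 4 ≤ t) (hH : Hyp t c A K b) (hK : 3 ≤ K.card)
    (hn : 7 * (t - 1) < 2 * A.card)
    (ih : ∀ D ⊆ A, D.card < A.card → Cl t c D) (hM : MonoCut c A) :
    A.card + ∑ i ∈ K, b i ≤ G t K.card := by
  obtain ⟨A1, A2, i, h1, h2, hd, hU, hc⟩ := hM
  rcases le_total A2.card A1.card with hle | hle
  · exact cut_aux hs ht hH hK hn ih h1 h2 hd hU hc hle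
  · exact cut_aux hs ht hH hK hn ih h2 h1 hd.symm (by rw [Finset.union_comm]; exact hU)
      (fun y hy x hx => by rw [hs]; exact hc x hx y hy) hle

/-- a Gallai partition when no monochromatic cut exists -/
structure Red (c : V → V → C) (A : Finset V) (r s : C) (p : V → V) : Prop where
  dep : ∀ x ∈ A, ∀ y ∈ A, ∀ x' ∈ A, ∀ y' ∈ A, p x = p x' → p y = p y' → p x ≠ p y → c x y = c x' y'
  col : ∀ x ∈ A, ∀ y ∈ A, p x ≠ p y → c x y = r ∨ c x y = s
  ne : r ≠ s
  nr : ∀ x ∈ A, ∃ y ∈ A, p y ≠ p x ∧ c x y = r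
  ns : ∀ x ∈ A, ∃ y ∈ A, p y ≠ p x ∧ c x y = s
  connr : Conn c A r
  conns : Conn c A s

lemma Red.swap {p : V → V} (h : Red c A r s p) : Red c A s r p :=
  ⟨h.dep, fun x hx y hy hn => (h.col x hx y hy hn).symm, h.ne.symm, h.ns, h.nr, h.conns, h.connr⟩

lemma Part.exists_nb {p : V → V} (hP : Part c A r s p) (hM : ¬ MonoCut c A) :
    ∀ x ∈ A, ∃ y ∈ A, p y ≠ p x ∧ c x y = r := by
  intro x hx
  by_contra hcon
  push Not at hcon
  obtain ⟨⟨u, hu, v, hv, huv⟩, h2, h3⟩ := hP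
  apply hM
  refine ⟨A.filter (fun y => p y = p x), A.filter (fun y => p y ≠ p x), s, ⟨x, by simp [hx]⟩, ?_,
    Finset.disjoint_filter_filter_not _ _ _, Finset.filter_union_filter_not_eq _ _, ?_⟩
  · by_cases hux : p u = p x
    · exact ⟨v, by simp only [Finset.mem_filter]; exact ⟨hv, fun h => huv (by rw [h, hux])⟩⟩
    · exact ⟨u, by simp only [Finset.mem_filter]; exact ⟨hu, hux⟩⟩
  · intro y hy z hz
    rw [Finset.mem_filter] at hy hz
    have hyz : p y ≠ p z := fun h => hz.2 (by rw [← h, hy.2])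
    rw [h2 y hy.1 z hz.1 x hx z hz.1 hy.2 rfl hyz]
    exact (h3 x hx z hz.1 (fun h => hz.2 h.symm)).resolve_left (hcon z hz.1 hz.2)

lemma Part.conn {p : V → V} (hs : ∀ x y, c x y = c y x) (hP : Part c A r s p) (hM : ¬ MonoCut c A) :
    Conn c A r := by
  intro D hD hne hcl
  by_contra hDA
  obtain ⟨z, hzA, hz⟩ := Finset.exists_of_ssubset (hD.ssubset_of_ne hDA)
  by_cases hpc : ∀ x ∈ D, ∀ y ∈ A, p x = p y → y ∈ D
  · apply hM
    refine ⟨D, A \ D, s, hne, ⟨z, by simp [hzA, hz]⟩, Finset.disjoint_sdiff,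
      Finset.union_sdiff_of_subset hD, ?_⟩
    intro x hx y hy
    rw [Finset.mem_sdiff] at hy
    exact (hP.2.2 x (hD hx) y hy.1 (fun h => hy.2 (hpc x hx y hy.1 h))).resolve_left
      (hcl x hx y hy.1 hy.2)
  · push Not at hpc
    obtain ⟨x, hx, y, hy, hxy, hyD⟩ := hpc
    obtain ⟨w, hw, hwx, hc⟩ := hP.exists_nb hM x (hD hx)
    by_cases hwD : w ∈ D
    · refine hcl w hwD y hy hyD ?_
      rw [hs, ← hc]
      exact (hP.2.1 x (hD hx) w hw y hy w hw hxy rfl (Ne.symm hwx)).symm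
    · exact hcl x hx w hw hwD hc

lemma Part.swap {p : V → V} (hP : Part c A r s p) : Part c A s r p :=
  ⟨hP.1, hP.2.1, fun x hx y hy hn => (hP.2.2 x hx y hy hn).symm⟩

lemma Part.red {p : V → V} (hs : ∀ x y, c x y = c y x) (hP : Part c A r s p)
    (hM : ¬ MonoCut c A) : Red c A r s p := by
  refine ⟨hP.2.1, hP.2.2, ?_, hP.exists_nb hM, hP.swap.exists_nb hM, hP.conn hs hM,
    hP.swap.conn hs hM⟩
  rintro rfl
  apply hM
  obtain ⟨⟨u, hu, v, hv, huv⟩, h2, h3⟩ := hP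
  refine ⟨A.filter (fun y => p y = p u), A.filter (fun y => p y ≠ p u), r, ⟨u, by simp [hu]⟩,
    ⟨v, by simp [hv, Ne.symm huv]⟩,
    Finset.disjoint_filter_filter_not _ _ _, Finset.filter_union_filter_not_eq _ _, ?_⟩
  intro y hy z hz
  rw [Finset.mem_filter] at hy hz
  have := h3 y hy.1 z hz.1 (fun h => hz.2 (by rw [← h, hy.2]))
  tauto

end Prep
end GR

namespace GR
open scoped Classical
section Large
variable {V C : Type*} {c : V → V → C} {A D : Finset V} {i r s : C} {t : ℕ} {K : Finset C} {b : C → ℕ}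
  {p : V → V}

/-- the part of `x` -/
noncomputable def Pt (A : Finset V) (p : V → V) (x : V) : Finset V := A.filter (fun y => p y = p x)

/-- neighbours of color `i` outside the part of `x` -/
noncomputable def Nb (c : V → V → C) (A : Finset V) (p : V → V) (i : C) (x : V) : Finset V :=
  A.filter (fun y => p y ≠ p x ∧ c x y = i)

lemma mem_Pt {x y : V} : y ∈ Pt A p x ↔ y ∈ A ∧ p y = p x := Finset.mem_filter

lemma mem_Nb {x y : V} : y ∈ Nb c A p i x ↔ y ∈ A ∧ p y ≠ p x ∧ c x y = i := Finset.mem_filter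

lemma Pt_sub {x : V} : Pt A p x ⊆ A := Finset.filter_subset _ _

lemma Nb_sub {x : V} : Nb c A p i x ⊆ A := Finset.filter_subset _ _

lemma Pt_Nb_disj {x : V} : Disjoint (Pt A p x) (Nb c A p i x) := by
  rw [Finset.disjoint_left]; intro a ha hb
  exact (mem_Nb.1 hb).2.1 (mem_Pt.1 ha).2

lemma Red.join (h : Red c A r s p) {x : V} (hx : x ∈ A) :
    ∀ u ∈ Pt A p x, ∀ v ∈ Nb c A p i x, c u v = i := by
  intro u hu v hv
  rw [mem_Pt] at hu
  rw [mem_Nb] at hv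
  rw [h.dep u hu.1 v hv.1 x hx v hv.1 hu.2 rfl (fun h => hv.2.1 (by rw [← h, hu.2]))]
  exact hv.2.2

lemma Red.Nb_closed (h : Red c A r s p) {x y z : V} (hx : x ∈ A) (hy : y ∈ Nb c A p i x)
    (hz : z ∈ A) (hyz : p z = p y) : z ∈ Nb c A p i x := by
  rw [mem_Nb] at hy ⊢
  refine ⟨hz, fun h => hy.2.1 (by rw [← hyz, h]), ?_⟩
  rw [← hy.2.2]
  exact (h.dep x hx y hy.1 x hx z hz rfl hyz.symm (Ne.symm hy.2.1)).symm

lemma Red.card (h : Red c A r s p) {x : V} (hx : x ∈ A) :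
    A.card = (Pt A p x).card + (Nb c A p r x).card + (Nb c A p s x).card := by
  have e1 : A = Pt A p x ∪ (Nb c A p r x ∪ Nb c A p s x) := by
    ext y
    simp only [Finset.mem_union, mem_Pt, mem_Nb]
    constructor
    · intro hy
      by_cases hp : p y = p x
      · exact Or.inl ⟨hy, hp⟩
      · rcases h.col x hx y hy (Ne.symm hp) with hc | hc
        · exact Or.inr (Or.inl ⟨hy, hp, hc⟩)
        · exact Or.inr (Or.inr ⟨hy, hp, hc⟩)
    · tauto
  have d1 : Disjoint (Nb c A p r x) (Nb c A p s x) := by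
    rw [Finset.disjoint_left]; intro a ha hb
    exact h.ne ((mem_Nb.1 ha).2.2.symm.trans (mem_Nb.1 hb).2.2)
  have d2 : Disjoint (Pt A p x) (Nb c A p r x ∪ Nb c A p s x) :=
    Finset.disjoint_union_right.2 ⟨Pt_Nb_disj, Pt_Nb_disj⟩
  conv_lhs => rw [e1]
  rw [Finset.card_union_of_disjoint d2, Finset.card_union_of_disjoint d1]
  omega

lemma Red.memK (h : Red c A r s p) (hH : Hyp t c A K b) (hA : A.Nonempty) : r ∈ K := by
  obtain ⟨x, hx⟩ := hA
  obtain ⟨y, hy, hyx, hc⟩ := h.nr x hx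
  rw [← hc]
  exact hH.2.1 x hx y hy (fun h => hyx (by rw [h]))

lemma Red.NbPos (h : Red c A r s p) {x : V} (hx : x ∈ A) : 0 < (Nb c A p r x).card := by
  obtain ⟨y, hy, hyx, hc⟩ := h.nr x hx
  exact Finset.card_pos.2 ⟨y, mem_Nb.2 ⟨hy, hyx, hc⟩⟩

/-- both neighbourhoods small -/
lemma large_i (hs : ∀ x y, c x y = c y x) (hH : Hyp t c A K b)
    (hn : 7 * (t - 1) < 2 * A.card)
    (ih : ∀ D ⊆ A, D.card < A.card → Cl t c D) (hR : Red c A r s p) {x : V} (hx : x ∈ A)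
    (h1 : (Nb c A p r x).card < (t + 1) / 2) (h2 : (Nb c A p s x).card < (t + 1) / 2) :
    A.card + ∑ i ∈ K, b i ≤ G t K.card := by
  have hc := hR.card hx
  have hr := hR.memK hH ⟨x, hx⟩
  have hsK := hR.swap.memK hH ⟨x, hx⟩
  have hpos := hR.NbPos hx
  have p1 := peel hs (hH.2.2 r hr).1 (hH.2.2 r hr).2 Pt_sub Nb_sub Pt_Nb_disj (hR.join hx)
    (by omega) (by omega) (by omega)
  have p2 := peel hs (hH.2.2 s hsK).1 (hH.2.2 s hsK).2 Pt_sub Nb_sub Pt_Nb_disj (hR.join hx)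
    (by omega) (by omega) (by omega)
  have h3 := (hH.sub Pt_sub).update p1
  have h4 := h3.update (i := s) (m := (Nb c A p s x).card) (by
    rw [Function.update_of_ne hR.ne.symm]; exact p2)
  have := ih _ Pt_sub (by omega) _ _ h4
  rw [sum_update hsK, sum_update hr] at this
  omega

/-- one small neighbourhood -/
lemma large_ii (hs : ∀ x y, c x y = c y x) (ht : 4 ≤ t) (hH : Hyp t c A K b) (hK : 3 ≤ K.card)
    (ih : ∀ D ⊆ A, D.card < A.card → Cl t c D) (hR : Red c A r s p) {x : V} (hx : x ∈ A)
    (h0 : (t + 1) / 2 ≤ (Pt A p x).card)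
    (h1 : (t + 1) / 2 ≤ (Nb c A p r x).card) (h2 : (Nb c A p s x).card < (t + 1) / 2) :
    A.card + ∑ i ∈ K, b i ≤ G t K.card := by
  have hc := hR.card hx
  have hr := hR.memK hH ⟨x, hx⟩
  have hsK := hR.swap.memK hH ⟨x, hx⟩
  have hG := G_facts t (K.card - 1) (by omega)
  rw [show K.card - 1 + 1 = K.card by omega] at hG
  obtain ⟨hb, f1, f2⟩ := bigpair hs ht (hH.2.2 r hr).2 Pt_sub Nb_sub Pt_Nb_disj (hR.join hx) h0 h1
  have e2 := (ih _ Nb_sub (by omega)).erase hH Nb_sub f2 hr (by omega)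
  rw [← Finset.add_sum_erase K b hr, hb]
  by_cases hbig : t ≤ (Pt A p x).card + (Nb c A p s x).card
  · have p2 := peel hs (hH.2.2 s hsK).1 (hH.2.2 s hsK).2 Pt_sub Nb_sub Pt_Nb_disj (hR.join hx)
      (by omega) (by omega) (by omega)
    have e1 := (ih _ Pt_sub (by omega)).erase ((hH.sub Pt_sub).update p2) subset_rfl f1 hr (by omega)
    rw [sum_update (Finset.mem_erase.2 ⟨hR.ne.symm, hsK⟩)] at e1
    omega
  · omega

/-- analysis of one side when both neighbourhoods are large -/
lemma side (hs : ∀ x y, c x y = c y x) (ht : 4 ≤ t) (hH : Hyp t c A K b) (hK : 3 ≤ K.card)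
    (ih : ∀ D ⊆ A, D.card < A.card → Cl t c D) (hR : Red c A r s p) {x : V} (hx : x ∈ A)
    (hr : r ∈ K) (hsK : s ∈ K) (hbr : b r = 0) (hbs : b s = 0)
    (f1 : Free c (Pt A p x) r) (f2 : Free c (Pt A p x) s) (g1 : Free c (Nb c A p r x) r)
    (g2 : Free c (Nb c A p s x) s) :
    A.card + ∑ i ∈ K, b i ≤ G t K.card ∨ (Nb c A p r x).card ≤ 2 * G t (K.card - 2) := by
  have hc := hR.card hx
  have hG := G_facts t (K.card - 2) (by omega)
  rw [show K.card - 2 + 1 = K.card - 1 by omega, show K.card - 2 + 2 = K.card by omega] at hG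
  have hposr := hR.NbPos hx
  have hposs := hR.swap.NbPos hx
  have hgs := (hH.2.2 s hsK).2
  rw [hbs] at hgs
  have hgr := (hH.2.2 r hr).2
  rw [hbr] at hgr
  have hPt := (ih _ Pt_sub (by omega)).erase2 hH (Pt_sub (x := x) (p := p)) f1 f2 hr hsK hR.ne hK
  have hsum : ∑ i ∈ K, b i = ∑ j ∈ (K.erase r).erase s, b j := by
    rw [← Finset.add_sum_erase K b hr,
      ← Finset.add_sum_erase (K.erase r) b (Finset.mem_erase.2 ⟨hR.ne.symm, hsK⟩), hbr, hbs]
    omega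
  -- facts about a part inside the neighbourhood
  have hsubW : ∀ y ∈ Nb c A p r x, Pt A p y ⊆ Nb c A p r x := by
    intro y hy z hz
    rw [mem_Pt] at hz
    exact hR.Nb_closed hx hy hz.1 hz.2
  have hblue : ∀ u ∈ Nb c A p r x, ∀ v ∈ Nb c A p r x, p u ≠ p v → c u v = s := by
    intro u hu v hv huv
    exact (hR.col u (Nb_sub hu) v (Nb_sub hv) huv).resolve_left
      (g1 u hu v hv (fun h => huv (by rw [h])))
  have hWjoin : ∀ y ∈ Nb c A p r x, ∀ u ∈ Pt A p y, ∀ v ∈ Nb c A p r x \ Pt A p y, c u v = s := by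
    intro y hy u hu v hv
    rw [Finset.mem_sdiff, mem_Pt] at hv
    refine hblue u (hsubW y hy hu) v hv.1 (fun h => hv.2 ⟨Nb_sub hv.1, ?_⟩)
    rw [← h, (mem_Pt.1 hu).2]
  have hsd : Nb c A p r x \ Pt A p x ⊆ A := Finset.sdiff_subset.trans Nb_sub
  by_cases hW : ∃ y ∈ Nb c A p r x, (t + 1) / 2 ≤ (Pt A p y).card ∧ ¬ Free c (Pt A p y) s
  · left
    obtain ⟨y, hy, hyc, hyf⟩ := hW
    have hyA : y ∈ A := Nb_sub hy
    have hcW := Finset.card_sdiff_add_card_eq_card (hsubW y hy)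
    have hWr : Free c (Pt A p y) r := g1.mono (hsubW y hy)
    have small1 : (Nb c A p r x \ Pt A p y).card < t / 2 := by
      by_contra hcon
      exact hyf (hgs.noInner hs ht Pt_sub (Finset.sdiff_subset.trans Nb_sub) Finset.disjoint_sdiff
        (hWjoin y hy) hyc (by omega))
    have hWc := (ih _ Pt_sub (by omega)).erase hH (Pt_sub (x := y) (p := p)) hWr hr (by omega)
    -- split the other neighbourhood
    have hcy := hR.card hyA
    have small2 : (Nb c A p s x ∩ Nb c A p s y).card < t / 2 := by
      by_contra hcon
      exact hyf (hgs.noInner (Y := Nb c A p s x ∩ Nb c A p s y) hs ht Pt_sub (Finset.inter_subset_left.trans Nb_sub)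
        (Pt_Nb_disj.mono_right Finset.inter_subset_right)
        (fun u hu v hv => hR.join hyA u hu v (Finset.mem_inter.1 hv).2) hyc (by omega))
    have hB2 : (Nb c A p s x ∩ Nb c A p r y).card ≤ G t (K.card - 2) := by
      by_cases hbig : (t + 1) / 2 ≤ (Nb c A p s x ∩ Nb c A p r y).card
      · obtain ⟨_, _, k3⟩ := bigpair hs ht hgr Pt_sub (Finset.inter_subset_left.trans Nb_sub)
          (Pt_Nb_disj.mono_right Finset.inter_subset_right)
          (fun u hu v hv => hR.join hyA u hu v (Finset.mem_inter.1 hv).2) hyc hbig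
        have := Finset.card_le_card
          (Finset.inter_subset_left : Nb c A p s x ∩ Nb c A p r y ⊆ Nb c A p s x)
        have := (ih (Nb c A p s x ∩ Nb c A p r y) (Finset.inter_subset_left.trans Nb_sub)
          (by omega)).erase2 hH (Finset.inter_subset_left.trans Nb_sub) k3
          (g2.mono Finset.inter_subset_left) hr hsK hR.ne hK
        omega
      · omega
    have hsplit : Nb c A p s x ⊆ (Nb c A p s x ∩ Nb c A p s y) ∪ (Nb c A p s x ∩ Nb c A p r y) := by
      intro z hz
      have hzy : p z ≠ p y := by
        intro h
        have := hR.Nb_closed hx hy (Nb_sub hz) h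
        rw [mem_Nb] at this hz
        exact hR.ne (this.2.2.symm.trans hz.2.2)
      simp only [Finset.mem_union, Finset.mem_inter, hz, true_and]
      rcases hR.col y hyA z (Nb_sub hz) (Ne.symm hzy) with h | h
      · exact Or.inr (mem_Nb.2 ⟨Nb_sub hz, hzy, h⟩)
      · exact Or.inl (mem_Nb.2 ⟨Nb_sub hz, hzy, h⟩)
    have k1 := Finset.card_le_card hsplit
    have k2 := Finset.card_union_le (Nb c A p s x ∩ Nb c A p s y) (Nb c A p s x ∩ Nb c A p r y)
    omega
  · right
    push Not at hW
    by_cases hL : ∃ y ∈ Nb c A p r x, (t + 1) / 2 ≤ (Pt A p y).card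
    · obtain ⟨y, hy, hyc⟩ := hL
      have hcW := Finset.card_sdiff_add_card_eq_card (hsubW y hy)
      have hWc := (ih _ Pt_sub (by omega)).erase2 hH (Pt_sub (x := y) (p := p))
        (g1.mono (hsubW y hy)) (hW y hy hyc) hr hsK hR.ne hK
      by_cases hbig : (t + 1) / 2 ≤ (Nb c A p r x \ Pt A p y).card
      · obtain ⟨_, _, k3⟩ := bigpair hs ht hgs Pt_sub (Finset.sdiff_subset.trans Nb_sub)
          Finset.disjoint_sdiff (hWjoin y hy) hyc hbig
        have := (ih (Nb c A p r x \ Pt A p y) (Finset.sdiff_subset.trans Nb_sub)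
          (by omega)).erase2 hH (Finset.sdiff_subset.trans Nb_sub) (g1.mono Finset.sdiff_subset) k3
          hr hsK hR.ne hK
        omega
      · omega
    · push Not at hL
      by_contra hcon
      obtain ⟨l, hl, hlen⟩ := multipart (i := s) hs ht (Nb_sub (x := x) (i := r)) p hblue (by
        intro y hy
        have h1 := hL y hy
        have h2 : ((Nb c A p r x).filter (fun z => p z = p y)).card ≤ (Pt A p y).card := by
          apply Finset.card_le_card
          intro z hz
          rw [Finset.mem_filter] at hz
          exact mem_Pt.2 ⟨Nb_sub hz.1, hz.2⟩
        omega) (by omega)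
      have := hgs.noPP hs hl
      omega

lemma large_iii (hs : ∀ x y, c x y = c y x) (ht : 4 ≤ t) (hH : Hyp t c A K b) (hK : 3 ≤ K.card)
    (ih : ∀ D ⊆ A, D.card < A.card → Cl t c D) (hR : Red c A r s p) {x : V} (hx : x ∈ A)
    (h0 : (t + 1) / 2 ≤ (Pt A p x).card)
    (h1 : (t + 1) / 2 ≤ (Nb c A p r x).card) (h2 : (t + 1) / 2 ≤ (Nb c A p s x).card) :
    A.card + ∑ i ∈ K, b i ≤ G t K.card := by
  have hc := hR.card hx
  have hr := hR.memK hH ⟨x, hx⟩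
  have hsK := hR.swap.memK hH ⟨x, hx⟩
  have hG := G_facts t (K.card - 2) (by omega)
  rw [show K.card - 2 + 1 = K.card - 1 by omega, show K.card - 2 + 2 = K.card by omega] at hG
  obtain ⟨hbr, f1, g1⟩ := bigpair hs ht (hH.2.2 r hr).2 Pt_sub Nb_sub Pt_Nb_disj (hR.join hx) h0 h1
  obtain ⟨hbs, f2, g2⟩ := bigpair hs ht (hH.2.2 s hsK).2 Pt_sub Nb_sub Pt_Nb_disj (hR.join hx) h0 h2
  rcases side hs ht hH hK ih hR hx hr hsK hbr hbs f1 f2 g1 g2 with h | h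
  · exact h
  rcases side hs ht hH hK ih hR.swap hx hsK hr hbs hbr f2 f1 g2 g1 with h' | h'
  · exact h'
  have hPt := (ih _ Pt_sub (by omega)).erase2 hH (Pt_sub (x := x) (p := p)) f1 f2 hr hsK hR.ne hK
  have hsum : ∑ i ∈ K, b i = ∑ j ∈ (K.erase r).erase s, b j := by
    rw [← Finset.add_sum_erase K b hr,
      ← Finset.add_sum_erase (K.erase r) b (Finset.mem_erase.2 ⟨hR.ne.symm, hsK⟩), hbr, hbs]
    omega
  omega

lemma large (hs : ∀ x y, c x y = c y x) (ht : 4 ≤ t) (hH : Hyp t c A K b) (hK : 3 ≤ K.card)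
    (hn : 7 * (t - 1) < 2 * A.card)
    (ih : ∀ D ⊆ A, D.card < A.card → Cl t c D) (hR : Red c A r s p) {x : V} (hx : x ∈ A)
    (h0 : (t + 1) / 2 ≤ (Pt A p x).card) : A.card + ∑ i ∈ K, b i ≤ G t K.card := by
  rcases Nat.lt_or_ge (Nb c A p r x).card ((t + 1) / 2) with h1 | h1
  · rcases Nat.lt_or_ge (Nb c A p s x).card ((t + 1) / 2) with h2 | h2
    · exact large_i hs hH hn ih hR hx h1 h2
    · exact large_ii hs ht hH hK ih hR.swap hx h0 h2 h1
  · rcases Nat.lt_or_ge (Nb c A p s x).card ((t + 1) / 2) with h2 | h2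
    · exact large_ii hs ht hH hK ih hR hx h0 h1 h2
    · exact large_iii hs ht hH hK ih hR hx h0 h1 h2

/-- all parts small: a dense color yields a contradiction -/
lemma dense_col (hs : ∀ x y, c x y = c y x) (ht : 4 ≤ t) {br bs : ℕ} (hr : Good t c A r br)
    (hg : Good t c A s bs) (hbr : 2 * br + 1 ≤ t) (hR : Red c A r s p)
    (hsm : ∀ x ∈ A, (Pt A p x).card < (t + 1) / 2)
    (hd : 2 * (t - 1 - br) * A.card < ∑ x ∈ A, (A.filter (fun y => E c A r x y)).card) : False := by
  obtain ⟨S, hSA, ⟨x, hx⟩, hS⟩ := dense (fun x y h => E.symm hs h) (t - 1 - br) A.card A rfl hd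
  rcases Nat.eq_zero_or_pos br with rfl | hb
  · by_cases htri : ∃ v1 v2 v3, E c A r v1 v2 ∧ E c A r v2 v3 ∧ E c A r v1 v3
    · obtain ⟨v1, v2, v3, a1, a2, a3⟩ := htri
      obtain ⟨l, hl⟩ := heads hs hR.connr a1 a2 a3 x (hSA hx)
      obtain ⟨l', hl', hlen⟩ := greedy (E.irr) _ S hS t x l hl hx (by omega)
      have := hr.1 rfl l' hl'
      omega
    · push Not at htri
      have : ∑ x ∈ A, (A.filter (fun y => E c A r x y)).card ≤ A.card • (2 * (t - 1 - 0)) := by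
        apply Finset.sum_le_card_nsmul
        intro y hy
        by_contra hcon
        obtain ⟨l, hl, hlen⟩ := multipart (i := s) (A := A) (X := A.filter (fun z => E c A r y z))
          hs ht (Finset.filter_subset _ _) p (by
            intro u hu v hv huv
            rw [Finset.mem_filter] at hu hv
            refine (hR.col u hu.1 v hv.1 huv).resolve_left (fun h => ?_)
            exact htri y u v hu.2 ⟨hu.1, hv.1, fun h => huv (by rw [h]), h⟩ hv.2) (by
            intro u hu
            rw [Finset.mem_filter] at hu
            have h1 := hsm u hu.1
            have h2 : ((A.filter (fun z => E c A r y z)).filter (fun z => p z = p u)).card ≤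
                (Pt A p u).card := by
              apply Finset.card_le_card
              intro z hz
              rw [Finset.mem_filter, Finset.mem_filter] at hz
              exact mem_Pt.2 ⟨hz.1.1, hz.2⟩
            omega) (by omega)
        have := hg.noPP hs hl
        omega
      rw [smul_eq_mul, mul_comm] at this
      omega
  · obtain ⟨l', hl', hlen⟩ := greedy (B := fun l => ∃ a ∈ A, l = [a]) (E.irr) _ S hS t x []
      (Ext.base _ ⟨x, hSA hx, rfl⟩) hx (by omega)
    have := hr.2 hb l' hl'
    omega

lemma small (hs : ∀ x y, c x y = c y x) (ht : 4 ≤ t) (hH : Hyp t c A K b) (hK : 3 ≤ K.card)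
    (hA : A.Nonempty) (hR : Red c A r s p)
    (hsm : ∀ x ∈ A, (Pt A p x).card < (t + 1) / 2) : A.card + ∑ i ∈ K, b i ≤ G t K.card := by
  by_contra hcon
  have hr := hR.memK hH hA
  have hsK := hR.swap.memK hH hA
  have hbr := hH.2.2 r hr
  have hbs := hH.2.2 s hsK
  have hsK' : s ∈ K.erase r := Finset.mem_erase.2 ⟨hR.ne.symm, hsK⟩
  have hsum : ∑ i ∈ K, b i = b r + (b s + ∑ j ∈ (K.erase r).erase s, b j) := by
    rw [← Finset.add_sum_erase K b hr, ← Finset.add_sum_erase (K.erase r) b hsK']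
  have hbd := hH.bound ((K.erase r).erase s)
    ((Finset.erase_subset _ _).trans (Finset.erase_subset _ _))
  rw [Finset.card_erase_of_mem hsK', Finset.card_erase_of_mem hr,
    show K.card - 1 - 1 = K.card - 2 by omega] at hbd
  have hlin := G_lin t K.card hK
  have hpos := Finset.card_pos.2 hA
  have hkey : 2 * (t - 1 - b r) + 2 * (t - 1 - b s) + 1 ≤ A.card - ((t + 1) / 2 - 1) := by omega
  have hdeg : A.card • (A.card - ((t + 1) / 2 - 1)) ≤
      ∑ x ∈ A, ((A.filter (fun y => E c A r x y)).card + (A.filter (fun y => E c A s x y)).card) := by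
    apply Finset.card_nsmul_le_sum
    intro x hx
    have h1 := hR.card hx
    have h2 := hsm x hx
    have sub : ∀ i, (Nb c A p i x).card ≤ (A.filter (fun y => E c A i x y)).card := by
      intro i
      apply Finset.card_le_card
      intro y hy
      rw [mem_Nb] at hy
      rw [Finset.mem_filter]
      exact ⟨hy.1, hx, hy.1, fun h => hy.2.1 (by rw [h]), hy.2.2⟩
    have := sub r
    have := sub s
    omega
  rw [Finset.sum_add_distrib, smul_eq_mul] at hdeg
  have h1 := Nat.mul_le_mul_left A.card hkey
  have h2 : A.card * (2 * (t - 1 - b r) + 2 * (t - 1 - b s) + 1) =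
    2 * (t - 1 - b r) * A.card + 2 * (t - 1 - b s) * A.card + A.card := by ring
  by_cases hd : 2 * (t - 1 - b r) * A.card < ∑ x ∈ A, (A.filter (fun y => E c A r x y)).card
  · exact dense_col hs ht hbr.2 hbs.2 hbr.1 hR hsm hd
  · exact dense_col hs ht hbs.2 hbr.2 hbs.1 hR.swap hsm (by omega)

/-- the main claim -/
lemma main (hs : ∀ x y, c x y = c y x) (ht : 4 ≤ t) (n : ℕ) : ∀ A : Finset V, A.card = n →
    Gal c A → Cl t c A := by
  induction n using Nat.strong_induction_on with
  | _ n ih =>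
  intro A hA hG K b hH
  by_cases hK1 : K.card = 1
  · obtain ⟨r, rfl⟩ := Finset.card_eq_one.1 hK1
    have := one (r := r) (br := b r) (c := c) (A := A) ht (fun x hx y hy hne => by
      simpa using hH.2.1 x hx y hy hne) (hH.2.2 r (by simp)).2 (hH.2.2 r (by simp)).1
    simpa [G, h] using this
  by_cases hK2 : K.card = 2
  · obtain ⟨r, s, hrs, rfl⟩ := Finset.card_eq_two.1 hK2
    have := two (r := r) (s := s) hs ht hrs (fun x hx y hy hne => by
      simpa using hH.2.1 x hx y hy hne) (hH.2.2 r (by simp)).2 (hH.2.2 s (by simp)).2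
      (hH.2.2 r (by simp)).1 (hH.2.2 s (by simp)).1
    rw [Finset.sum_pair hrs, hK2]
    simpa [G, h] using this
  have hKpos := Finset.card_pos.2 hH.1
  have hK : 3 ≤ K.card := by omega
  by_contra hcon
  have hlin := G_lin t K.card hK
  have hbd := hH.bound K subset_rfl
  have hmul : (t - 1) * K.card = (t - 1) * (K.card - 2) + 2 * (t - 1) := by
    obtain ⟨q, hq⟩ : ∃ q, K.card = q + 2 := ⟨K.card - 2, by omega⟩
    rw [hq, Nat.add_sub_cancel]; ring
  have hn : 7 * (t - 1) < 2 * A.card := by omega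
  have ih' : ∀ D ⊆ A, D.card < A.card → Cl t c D := fun D hD hlt =>
    ih D.card (by omega) D rfl (hG.mono hD)
  have hne : A.Nonempty := by rw [← Finset.card_pos]; omega
  by_cases hM : MonoCut c A
  · exact hcon (cut hs ht hH hK hn ih' hM)
  rcases gallai hs A.card A rfl (by omega) hG with h | ⟨r, s, p, hP⟩
  · exact hM h
  have hR := hP.red hs hM
  by_cases hL : ∃ x ∈ A, (t + 1) / 2 ≤ (Pt A p x).card
  · obtain ⟨x, hx, h0⟩ := hL
    exact hcon (large hs ht hH hK hn ih' hR hx h0)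
  · push Not at hL
    exact hcon (small hs ht hH hK hne hR hL)

end Large
end GR

namespace GR
open scoped Classical
section Upper
variable {V C : Type*} {c : V → V → C} {A : Finset V} {i : C} {t : ℕ}

lemma PP.seq (hs : ∀ x y, c x y = c y x) {l : List V} (h : PP c A i l) :
    3 ≤ l.length ∧ ∃ f : ℕ → V, (∀ a < l.length, f a ∈ l) ∧
      (∀ a < l.length, ∀ b < l.length, f a = f b → a = b) ∧
      (∀ a, a + 1 < l.length → c (f a) (f (a + 1)) = i) ∧ c (f 0) (f 2) = i ∧
      l.head? = some (f (l.length - 1)) := by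
  unfold PP at h
  induction h with
  | base l hl =>
    obtain ⟨x, y, z, rfl, h1, h2, h3⟩ := hl
    refine ⟨by simp, fun a => if a = 0 then z else if a = 1 then y else x, ?_, ?_, ?_, ?_, ?_⟩
    · intro a ha
      try dsimp only
      split_ifs <;> simp
    · intro a ha b hb
      simp only [List.length_cons, List.length_nil] at ha hb
      have n1 := h1.2.2.1
      have n2 := h2.2.2.1
      have n3 := h3.2.2.1
      interval_cases a <;> interval_cases b <;> simp <;> first | exact n1 | exact n2 | exact n3 | exact n1.symm | exact n2.symm | exact n3.symm
    · intro a ha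
      simp only [List.length_cons, List.length_nil] at ha
      have : a = 0 ∨ a = 1 := by omega
      rcases this with rfl | rfl
      · simpa using (h2.symm hs).2.2.2
      · simpa using (h1.symm hs).2.2.2
    · simpa using (h3.symm hs).2.2.2
    · simp
  | cons x y l h hy hr ih =>
    obtain ⟨h3, f, f1, f2, f3, f4, f5⟩ := ih
    have hlen : (y :: x :: l).length = (x :: l).length + 1 := rfl
    generalize hn : (x :: l).length = n at *
    have hx : f (n - 1) = x := by simpa using f5.symm
    refine ⟨by omega, fun a => if a = n then y else f a, ?_, ?_, ?_, ?_, ?_⟩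
    · intro a ha
      try dsimp only
      split_ifs with h1
      · simp
      · exact List.mem_cons_of_mem _ (f1 a (by omega))
    · intro a ha b hb hab
      dsimp only at hab
      split_ifs at hab with h1 h2 h2
      · omega
      · exact absurd (hab ▸ f1 b (by omega)) hy
      · exact absurd (hab ▸ f1 a (by omega)) hy
      · exact f2 a (by omega) b (by omega) hab
    · intro a ha
      by_cases h1 : a + 1 = n
      · have : a ≠ n := by omega
        have h2 : a = n - 1 := by omega
        simp only [h1, this, if_true, if_false]
        rw [h2, hx]
        exact hr.2.2.2
      · have : a ≠ n := by omega
        simp only [h1, this, if_false]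
        exact f3 a (by omega)
    · have h1 : 0 ≠ n := by omega
      have h2 : 2 ≠ n := by omega
      simp only [h1, h2, if_false]
      exact f4
    · rw [hlen]
      simp

lemma upper (k N t : ℕ) (hk : 1 ≤ k) (ht : 4 ≤ t) (c' : Sym2 (Fin N) → Fin k)
    (h1 : ¬ HasRainbowTriangle c') (h2 : ¬ HasMonoCopy c' (pathPlus t)) : N ≤ G t k := by
  have hs : ∀ x y : Fin N, c' s(x, y) = c' s(y, x) := fun x y => by rw [Sym2.eq_swap]
  have hg : Gal (fun x y => c' s(x, y)) (Finset.univ : Finset (Fin N)) := by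
    intro x _ y _ z _ hxy hxz hyz
    by_contra hcon
    push Not at hcon
    exact h1 ⟨x, y, z, hxy, hxz, hyz, hcon⟩
  have hm := main (c := fun x y => c' s(x, y)) hs ht _ Finset.univ rfl hg Finset.univ (fun _ => 0) ?_
  · simpa using hm
  · refine ⟨⟨⟨0, hk⟩, Finset.mem_univ _⟩, fun _ _ _ _ _ => Finset.mem_univ _, ?_⟩
    intro i _
    refine ⟨by show 2 * 0 + 1 ≤ t; omega, ?_, fun h => absurd h (by show ¬ (1 ≤ 0); omega)⟩
    intro _ l hl
    by_contra hcon
    obtain ⟨_, f, -, f2, f3, f4, -⟩ := PP.seq (c := fun x y => c' s(x, y)) hs hl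
    have key : ∀ a b : Fin t, (b.val = a.val + 1 ∨ (a.val = 0 ∧ b.val = 2)) →
        c' s(f a, f b) = i := by
      intro a b hab
      rcases hab with hab | ⟨ha, hb⟩
      · rw [hab]
        exact f3 a (by omega)
      · rw [ha, hb]
        exact f4
    refine h2 ⟨i, fun a => f a, ?_, ?_⟩
    · intro a b hab
      exact Fin.ext (f2 a (by omega) b (by omega) hab)
    · intro a b hab
      rw [pathPlus, SimpleGraph.fromRel_adj] at hab
      rcases hab.2 with h | h
      · exact key a b h
      · rw [hs]
        exact key b a h

lemma h_odd (j : ℕ) : h (2 * j + 1) = 2 * 5 ^ j := by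
  induction j with
  | zero => rfl
  | succ j ih =>
    rw [show 2 * (j + 1) + 1 = (2 * j + 1) + 2 by ring]
    show 5 * h (2 * j + 1) = _
    rw [ih, pow_succ]
    ring

end Upper

section Lower

/-- invariant of the lower bound construction -/
structure LB (t k : ℕ) (V : Type) (c : V → V → ℕ) (lab : V → ℕ) : Prop where
  symm : ∀ x y, c x y = c y x
  lt : ∀ x y, c x y < k
  gal : ∀ x y z, x ≠ y → x ≠ z → y ≠ z → c x y = c x z ∨ c x y = c y z ∨ c x z = c y z
  tri : ∀ x y z, x ≠ y → x ≠ z → y ≠ z → c x y = c x z → c x y = c y z → c x y = 0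
  fib : ∀ x y, x ≠ y → c x y = 0 → lab x = lab y
  small : ∀ S : Finset V, (∀ x ∈ S, ∀ y ∈ S, lab x = lab y) → S.card ≤ t - 1

lemma LB_zero (t : ℕ) : LB t 2 (Fin 2 × Fin (t - 1)) (fun p q => if p.1 = q.1 then 0 else 1)
    (fun p => p.1.val) := by
  refine ⟨?_, ?_, ?_, ?_, ?_, ?_⟩
  · intro x y
    simp only [eq_comm]
  · intro x y
    try dsimp only
    split_ifs <;> omega
  · intro x y z _ _ _
    try dsimp only
    split_ifs <;> simp
  · rintro ⟨x, x'⟩ ⟨y, y'⟩ ⟨z, z'⟩ _ _ _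
    try dsimp only
    split_ifs <;> first | (intros; omega) | skip
  · intro x y _ h
    try dsimp only at h
    split_ifs at h with h1
    rw [h1]
  · intro S hS
    have : S.card ≤ (Finset.univ : Finset (Fin (t - 1))).card := by
      refine Finset.card_le_card_of_injOn (fun p => p.2) (fun _ _ => Finset.mem_coe.2 (Finset.mem_univ _)) ?_
      intro x hx y hy hxy
      exact Prod.ext (Fin.ext (hS x hx y hy)) hxy
    simpa using this

/-- adjacency of the five-cycle -/
def adj5 (a b : Fin 5) : Bool := decide (a = b + 1) || decide (b = a + 1)

lemma adj5_symm : ∀ a b, adj5 a b = adj5 b a := by decide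

lemma adj5_tri : ∀ a b d : Fin 5, a ≠ b → a ≠ d → b ≠ d →
    ¬ (adj5 a b = adj5 a d ∧ adj5 a b = adj5 b d) := by decide

lemma LB_succ {t k : ℕ} {V : Type} {c : V → V → ℕ} {lab : V → ℕ} (hk : 1 ≤ k)
    (H : LB t k V c lab) :
    LB t (k + 2) (Fin 5 × V)
      (fun p q => if p.1 = q.1 then c p.2 q.2 else if adj5 p.1 q.1 = true then k else k + 1)
      (fun p => 5 * lab p.2 + p.1.val) := by
  refine ⟨?_, ?_, ?_, ?_, ?_, ?_⟩
  · intro x y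
    try dsimp only
    rw [H.symm, adj5_symm]
    simp only [eq_comm]
  · intro x y
    have := H.lt x.2 y.2
    try dsimp only
    split_ifs <;> omega
  · rintro ⟨x, x'⟩ ⟨y, y'⟩ ⟨z, z'⟩ hxy hxz hyz
    try dsimp only
    by_cases h1 : x = y
    · subst h1
      by_cases h2 : x = z
      · subst h2
        have := H.gal x' y' z' (fun h => hxy (by rw [h])) (fun h => hxz (by rw [h]))
          (fun h => hyz (by rw [h]))
        simpa using this
      · simp [h2]
    · by_cases h2 : x = z
      · subst h2
        right; left
        rw [if_neg h1, if_neg (Ne.symm h1), adj5_symm]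
      · by_cases h3 : y = z
        · subst h3
          simp [h1]
        · simp only [h1, h2, h3, if_false]
          split_ifs <;> simp
  · rintro ⟨x, x'⟩ ⟨y, y'⟩ ⟨z, z'⟩ hxy hxz hyz
    try dsimp only
    have l1 := H.lt x' y'
    have l2 := H.lt x' z'
    have l3 := H.lt y' z'
    by_cases h1 : x = y
    · subst h1
      by_cases h2 : x = z
      · subst h2
        have := H.tri x' y' z' (fun h => hxy (by rw [h])) (fun h => hxz (by rw [h]))
          (fun h => hyz (by rw [h]))
        simpa using this
      · simp only [h2, if_true, if_false]
        split_ifs <;> intros <;> omega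
    · by_cases h2 : x = z
      · subst h2
        simp only [h1, if_true, if_false]
        split_ifs <;> intros <;> omega
      · by_cases h3 : y = z
        · subst h3
          simp only [h1, if_true, if_false]
          split_ifs <;> intros <;> omega
        · have := adj5_tri x y z h1 h2 h3
          simp only [h1, h2, h3, if_false]
          intro e1 e2
          exfalso
          apply this
          constructor
          · cases q1 : adj5 x y <;> cases q2 : adj5 x z <;> simp [q1, q2] at e1 ⊢
          · cases q1 : adj5 x y <;> cases q2 : adj5 y z <;> simp [q1, q2] at e2 ⊢
  · rintro ⟨x, x'⟩ ⟨y, y'⟩ hxy h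
    dsimp only at h ⊢
    by_cases h1 : x = y
    · subst h1
      rw [if_pos rfl] at h
      rw [H.fib x' y' (fun h => hxy (by rw [h])) h]
    · rw [if_neg h1] at h
      split_ifs at h <;> omega
  · intro S hS
    have hS1 : ∀ x ∈ S, ∀ y ∈ S, x.1 = y.1 ∧ lab x.2 = lab y.2 := by
      intro x hx y hy
      have := hS x hx y hy
      try dsimp only at this
      have a1 := x.1.isLt
      have a2 := y.1.isLt
      exact ⟨Fin.ext (by omega), by omega⟩
    have hinj : Set.InjOn (fun p : Fin 5 × V => p.2) S := fun x hx y hy hxy =>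
      Prod.ext (hS1 x hx y hy).1 hxy
    rw [← Finset.card_image_of_injOn hinj]
    apply H.small
    intro x hx y hy
    obtain ⟨x', hx', rfl⟩ := Finset.mem_image.1 hx
    obtain ⟨y', hy', rfl⟩ := Finset.mem_image.1 hy
    exact (hS1 x' hx' y' hy').2

lemma LB_exists (t j : ℕ) : ∃ (V : Type) (_ : Fintype V) (c : V → V → ℕ) (lab : V → ℕ),
    Fintype.card V = 2 * (t - 1) * 5 ^ j ∧ LB t (2 * j + 2) V c lab := by
  induction j with
  | zero => exact ⟨_, inferInstance, _, _, by simp, LB_zero t⟩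
  | succ j ih =>
    obtain ⟨V, _, c, lab, h1, h2⟩ := ih
    refine ⟨Fin 5 × V, inferInstance, _, _, ?_, LB_succ (by omega) h2⟩
    rw [Fintype.card_prod, h1, Fintype.card_fin, pow_succ]
    ring

lemma lower (t j m : ℕ) (ht : 4 ≤ t) (hm : m ≤ 2 * (t - 1) * 5 ^ j) :
    ∃ c : Sym2 (Fin m) → Fin (2 * j + 2), ¬ HasRainbowTriangle c ∧
      ¬ HasMonoCopy c (pathPlus t) := by
  obtain ⟨V, _, c, lab, hV, H⟩ := LB_exists t j
  obtain ⟨e⟩ : Nonempty (Fin m ↪ V) := by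
    apply Function.Embedding.nonempty_of_card_le
    rw [hV, Fintype.card_fin]
    exact hm
  refine ⟨Sym2.lift ⟨fun x y => ⟨c (e x) (e y), H.lt _ _⟩, fun x y => Fin.ext (H.symm _ _)⟩,
    ?_, ?_⟩
  · rintro ⟨x, y, z, hxy, hxz, hyz, h1, h2, h3⟩
    simp only [Sym2.lift_mk, ne_eq, Fin.mk.injEq] at h1 h2 h3
    have := H.gal (e x) (e y) (e z) (e.injective.ne hxy) (e.injective.ne hxz) (e.injective.ne hyz)
    tauto
  · rintro ⟨col, f, hf, hc⟩
    have hc' : ∀ a b, (pathPlus t).Adj a b → c (e (f a)) (e (f b)) = col.val := by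
      intro a b hab
      rw [← hc a b hab]
      rfl
    have hinj : ∀ a b, a ≠ b → e (f a) ≠ e (f b) := fun a b hab h => hab (hf (e.injective h))
    have adj : ∀ a b : Fin t, (b.val = a.val + 1 ∨ (a.val = 0 ∧ b.val = 2)) →
        (pathPlus t).Adj a b := by
      intro a b hab
      rw [pathPlus, SimpleGraph.fromRel_adj]
      exact ⟨fun h => by rw [h] at hab; omega, Or.inl hab⟩
    have e1 := hc' ⟨0, by omega⟩ ⟨1, by omega⟩ (adj _ _ (by simp))
    have e2 := hc' ⟨0, by omega⟩ ⟨2, by omega⟩ (adj _ _ (by simp))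
    have e3 := hc' ⟨1, by omega⟩ ⟨2, by omega⟩ (adj _ _ (by simp))
    have h0 : col.val = 0 := by
      have := H.tri _ _ _ (hinj ⟨0, by omega⟩ ⟨1, by omega⟩ (by simp))
        (hinj ⟨0, by omega⟩ ⟨2, by omega⟩ (by simp)) (hinj ⟨1, by omega⟩ ⟨2, by omega⟩ (by simp))
        (e1.trans e2.symm) (e1.trans e3.symm)
      omega
    have hlab : ∀ n (hn : n < t), lab (e (f ⟨n, hn⟩)) = lab (e (f ⟨0, by omega⟩)) := by
      intro n
      induction n with
      | zero => intro hn; rfl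
      | succ n ih =>
        intro hn
        rw [← ih (by omega)]
        refine (H.fib _ _ (hinj _ _ (by simp)) ?_).symm
        rw [hc' _ _ (adj _ _ (Or.inl rfl)), h0]
    have := H.small (Finset.univ.image (fun a => e (f a))) (by
      intro x hx y hy
      obtain ⟨a, _, rfl⟩ := Finset.mem_image.1 hx
      obtain ⟨b, _, rfl⟩ := Finset.mem_image.1 hy
      rw [hlab a.1 a.2, hlab b.1 b.2])
    rw [Finset.card_image_of_injective (f := fun a => e (f a)) _ (e.injective.comp hf), Finset.card_univ,
      Fintype.card_fin] at this
    omega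

end Lower
end GR

/-- For every even `k ≥ 2` and `t ≥ 4`, every `k`-coloring of the edges of the complete
graph on `2(t-1)·5^((k-2)/2) + 1` vertices contains a rainbow triangle or a monochromatic
copy of `P_t^+`; with the matching lower bound,
`gr_k(K_3 : P_t^+) = 2(t-1)·5^((k-2)/2) + 1`. -/
theorem gallaiRamsey_pathPlus_even (k t : ℕ) (hk : 2 ≤ k) (hke : Even k) (ht : 4 ≤ t) :
    (∀ c : Sym2 (Fin (2 * (t - 1) * 5 ^ ((k - 2) / 2) + 1)) → Fin k,
      HasRainbowTriangle c ∨ HasMonoCopy c (pathPlus t)) ∧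
    grK3 k (pathPlus t) = 2 * (t - 1) * 5 ^ ((k - 2) / 2) + 1 := by
  obtain ⟨j, hj⟩ : ∃ j, k = 2 * j + 2 := by
    obtain ⟨m, hm⟩ := hke
    exact ⟨m - 1, by omega⟩
  subst hj
  have hj : (2 * j + 2 - 2) / 2 = j := by omega
  rw [hj]
  have up : ∀ c : Sym2 (Fin (2 * (t - 1) * 5 ^ j + 1)) → Fin (2 * j + 2),
      HasRainbowTriangle c ∨ HasMonoCopy c (pathPlus t) := by
    intro c
    by_contra hcon
    push Not at hcon
    have h1 := GR.upper _ _ t (by omega) ht c hcon.1 hcon.2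
    have h2 : GR.G t (2 * j + 2) = 2 * (t - 1) * 5 ^ j := by
      show (t - 1) * GR.h (2 * j + 1) = _
      rw [GR.h_odd]
      ring
    omega
  refine ⟨up, le_antisymm (Nat.sInf_le up) ?_⟩
  refine le_csInf ⟨_, up⟩ ?_
  intro m hm
  by_contra hcon
  obtain ⟨c, h1, h2⟩ := GR.lower t j m ht (by omega)
  exact (hm c).elim h1 h2
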